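/- arXiv:1410.8198 — 3 statements merged into one kernel-verified Lean document; each statement's English description precedes it below -/
import Mathlib

section
/- For an integer ℓ ≥ 1, let η(ℓ) denote the infimum, over all admissible sets B of ℓ distinct integers and all sets A ⊆ ℤ with the property that for every integer t ∉ B such that B ∪ {t} is admissible there exists b ∈ B with t − b ∈ A, of the lower density of A. Then η(ℓ) · ℓ · log ℓ → e^{−γ} as ℓ → ∞, where γ is the Euler–Mascheroni constant. -/
open Filter

/-- A set of integers is admissible if, for every prime `p`, its elements do not
cover all residue classes mod `p`. -/
def AdmissibleSet (B : Set ℤ) : Prop :=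
  ∀ p : ℕ, p.Prime → ∃ r : ZMod p, ∀ b ∈ B, (b : ZMod p) ≠ r

/-- The lower density of a set of integers: `liminf_{x → ∞} |A ∩ [1,x]| / x`. -/
noncomputable def lowerDensity (A : Set ℤ) : ℝ :=
  Filter.liminf (fun x : ℕ => (Nat.card (A ∩ Set.Icc 1 (x : ℤ) : Set ℤ) : ℝ) / x)
    Filter.atTop

/-- The upper density of a set of integers: `limsup_{x → ∞} |A ∩ [1,x]| / x`. -/
noncomputable def upperDensity (A : Set ℤ) : ℝ :=
  Filter.limsup (fun x : ℕ => (Nat.card (A ∩ Set.Icc 1 (x : ℤ) : Set ℤ) : ℝ) / x)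
    Filter.atTop

/-- `η(ℓ)`: the infimum, over admissible sets `B` of `ℓ` distinct integers and sets
`A ⊆ ℤ` such that whenever `B ∪ {t}` is admissible (with `t ∉ B`) some `t - b` lies
in `A`, of the lower density of `A`. -/
noncomputable def eta (ℓ : ℕ) : ℝ :=
  sInf { d : ℝ | ∃ (B : Finset ℤ) (A : Set ℤ), B.card = ℓ ∧ AdmissibleSet ↑B ∧
    (∀ t : ℤ, t ∉ B → AdmissibleSet (insert t (B : Set ℤ)) → ∃ b ∈ B, t - b ∈ A) ∧
    d = lowerDensity A }

/-!
An admissible set `B` of size `ℓ` misses some class `c` modulo every prime `p ≤ ℓ + 1`, and then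
`B ∪ {t}` is admissible for every `t` with `t - c` coprime to `Q = ∏ (p ≤ ℓ + 1), p`. These `t` have
density `∏ (p ≤ ℓ + 1), (1 - 1 / p)` and all but finitely many lie in `B + A`, so that density
is at most `ℓ` times the lower density of `A`.

Conversely, fix `y < ℓ` and use at most `y` elements of `B` to meet every nonzero class modulo every
`p ≤ y`, so that admissible extensions are prime to `∏ (p ≤ y), p`. The remaining `m ≥ ℓ - y`
elements run through a progression of difference `P = ∏ (p ≤ ℓ), p`: they translate the integers
prime to `∏ (p ≤ y), p` in every `m`-th block of length `P` onto all blocks, and the density of such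
an `A` is `∏ (p ≤ y), (1 - 1 / p) / m`. With `y = ⌊ℓ / log ℓ⌋` both bounds are asymptotic to
`e ^ (-γ) / (ℓ log ℓ)` by Mertens' third theorem.

For the constant in Mertens' theorem, compare `∑ 1 / p ^ s ≈ log ζ(s) ≈ -log (s - 1)` with
`∑ 2 ^ (-(s - 1) k) / k = -log (1 - 2 ^ (1 - s))` as `s → 1⁺`. The difference is a Dirichlet series
with coefficients `1 / p` at primes and `-1 / k` at `2 ^ k`, whose sum at `s = 1` converges by
Mertens' first theorem and hence equals its Abel limit; the partial harmonic sums bring in `γ`.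
-/

open Asymptotics Finset Real Topology

lemma log_factorial_eq_sum_primesLE (N : ℕ) :
    log N.factorial = ∑ p ∈ N.primesLE, (N.factorial.factorization p : ℝ) * log p := by
  rw [log_nat_eq_sum_factorization]
  refine Finsupp.sum_of_support_subset _ (fun p hp => ?_) _ (by simp)
  rw [Nat.support_factorization, Nat.mem_primeFactors] at hp
  exact Nat.mem_primesLE.2 ⟨hp.1.dvd_factorial.1 hp.2.1, hp.1⟩

lemma div_le_factorization_factorial {p : ℕ} (hp : p.Prime) (N : ℕ) :
    N / p ≤ N.factorial.factorization p := by
  rw [Nat.factorization_factorial hp (Nat.lt_add_of_pos_right (n := Nat.log p N) two_pos)]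
  simpa using single_le_sum (f := fun i => N / p ^ i) (fun _ _ => Nat.zero_le _)
    (mem_Ico.2 ⟨le_rfl, by lia⟩ : 1 ∈ Ico 1 (Nat.log p N + 2))

lemma mul_log_sub_le_log_factorial (N : ℕ) : N * log N - N ≤ log N.factorial := by
  rcases N.eq_zero_or_pos with rfl | hN
  · simp
  have hstirling := Stirling.le_log_factorial_stirling hN.ne'
  have hlog : 0 ≤ log N := log_natCast_nonneg N
  have hpi : 0 ≤ log (2 * π) := log_nonneg (by linarith [pi_gt_three])
  linarith

lemma log_factorial_le_mul_log (N : ℕ) : log N.factorial ≤ N * log N := by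
  rw [← log_pow]
  exact log_le_log (by positivity) (mod_cast Nat.factorial_le_pow N)

lemma mul_sum_log_div_prime_le (N : ℕ) :
    N * ∑ p ∈ N.primesLE, log p / p ≤ log N.factorial + Chebyshev.theta N := by
  rw [log_factorial_eq_sum_primesLE, Chebyshev.theta_eq_sum_primesLE_log, mul_sum,
    ← sum_add_distrib]
  refine sum_le_sum fun p hp => ?_
  have hdiv : (N : ℝ) / p ≤ N.factorial.factorization p + 1 := by
    have hfloor : (N : ℝ) / p < (N / p : ℕ) + 1 := by
      rw [← Nat.floor_div_eq_div (K := ℝ)]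
      exact Nat.lt_floor_add_one _
    have hle : ((N / p : ℕ) : ℝ) ≤ N.factorial.factorization p :=
      mod_cast div_le_factorization_factorial (Nat.prime_of_mem_primesLE hp) N
    linarith
  calc (N : ℝ) * (log p / p) = N / p * log p := by ring
    _ ≤ (N.factorial.factorization p + 1) * log p := by gcongr
    _ = N.factorial.factorization p * log p + log p := by ring

lemma log_factorial_le_mul_sum (N : ℕ) :
    log N.factorial ≤
      N * ∑ p ∈ N.primesLE, (log p / p + log p / ((p : ℝ) * (p - 1))) := by
  rw [log_factorial_eq_sum_primesLE, mul_sum]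
  refine sum_le_sum fun p hp => ?_
  have hp := Nat.prime_of_mem_primesLE hp
  have hp1 : (0 : ℝ) < p - 1 := sub_pos.2 (mod_cast hp.one_lt)
  have hval : (N.factorial.factorization p : ℝ) ≤ N / (p - 1) := by
    rw [← Nat.cast_pred hp.pos]
    exact (Nat.cast_le.2 (Nat.factorization_factorial_le_div_pred hp N)).trans Nat.cast_div_le
  calc (N.factorial.factorization p : ℝ) * log p ≤ N / (p - 1) * log p := by gcongr
    _ = N * (log p / p + log p / ((p : ℝ) * (p - 1))) := by
      have hp0 : (p : ℝ) ≠ 0 := mod_cast hp.ne_zero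
      field_simp
      ring

lemma log_div_mul_sub_one_nonneg (n : ℕ) : 0 ≤ log n / ((n : ℝ) * (n - 1)) := by
  rcases n.eq_zero_or_pos with rfl | hn
  · simp
  · have h1 : (1 : ℝ) ≤ n := mod_cast hn
    exact div_nonneg (log_nonneg h1) (mul_nonneg (by linarith) (by linarith))

lemma summable_log_div_mul_sub_one : Summable fun n : ℕ => log n / ((n : ℝ) * (n - 1)) := by
  refine ((summable_nat_rpow.2 (by norm_num : (-(3 / 2) : ℝ) < -1)).mul_left
    4).of_norm_bounded_eventually_nat ?_
  filter_upwards [eventually_ge_atTop 2] with n hn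
  have hn2 : (2 : ℝ) ≤ n := mod_cast hn
  have hlog : log n ≤ 2 * (n : ℝ) ^ (1 / 2 : ℝ) := by
    have := log_le_rpow_div (x := n) (ε := 1 / 2) (by positivity) (by norm_num)
    linarith
  rw [norm_of_nonneg (log_div_mul_sub_one_nonneg n)]
  calc log n / ((n : ℝ) * (n - 1)) ≤ 2 * (n : ℝ) ^ (1 / 2 : ℝ) / (n ^ (2 : ℝ) / 2) := by
        gcongr
        rw [rpow_two]
        nlinarith
    _ = 4 * ((n : ℝ) ^ (1 / 2 : ℝ) / (n : ℝ) ^ (2 : ℝ)) := by field_simp; norm_num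
    _ = 4 * (n : ℝ) ^ (-(3 / 2) : ℝ) := by
        rw [← rpow_sub (by positivity)]
        norm_num

/-- **Mertens' first theorem**. -/
theorem exists_abs_sum_log_div_prime_sub_log_le :
    ∃ C : ℝ, ∀ N : ℕ, |∑ p ∈ N.primesLE, log p / p - log N| ≤ C := by
  set D : ℝ := ∑' n : ℕ, log n / ((n : ℝ) * (n - 1))
  have hD : 0 ≤ D := tsum_nonneg log_div_mul_sub_one_nonneg
  have hlog4 : 0 ≤ log 4 := log_nonneg (by norm_num)
  refine ⟨D + 1 + log 4, fun N => ?_⟩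
  rcases N.eq_zero_or_pos with rfl | hN
  · simp only [Nat.primesLE_zero, sum_empty, CharP.cast_eq_zero, log_zero, sub_zero, abs_zero]
    linarith
  have hN : (0 : ℝ) < N := mod_cast hN
  set S := ∑ p ∈ N.primesLE, log p / p
  have hupper : S ≤ log N + log 4 := by
    refine le_of_mul_le_mul_left ?_ hN
    linarith [mul_sum_log_div_prime_le N, log_factorial_le_mul_log N,
      Chebyshev.theta_le_log4_mul_x hN.le]
  have hlower : log N - 1 ≤ S + D := by
    refine le_of_mul_le_mul_left ?_ hN
    calc N * (log N - 1) = N * log N - N := by ring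
      _ ≤ log N.factorial := mul_log_sub_le_log_factorial N
      _ ≤ N * (S + ∑ p ∈ N.primesLE, log p / ((p : ℝ) * (p - 1))) :=
        (log_factorial_le_mul_sum N).trans_eq (by rw [sum_add_distrib])
      _ ≤ N * (S + D) := by
        gcongr
        exact summable_log_div_mul_sub_one.sum_le_tsum _ fun n _ => log_div_mul_sub_one_nonneg n
  rw [abs_le]
  constructor <;> linarith

lemma tendsto_tsum_mul_of_hasSum_one {ι : Type*} {l : Filter ι} {v : ι → ℕ → ℝ} {u : ℕ → ℝ}
    {K : ℝ} (hu : Tendsto u atTop (𝓝 K)) (hv : ∀ᶠ i in l, 0 ≤ v i)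
    (hsum : ∀ᶠ i in l, HasSum (v i) 1) (hzero : ∀ n, Tendsto (v · n) l (𝓝 0)) :
    Tendsto (fun i => ∑' n, u n * v i n) l (𝓝 K) := by
  rw [Metric.tendsto_nhds]
  intro δ hδ
  obtain ⟨M, hM⟩ := eventually_atTop.1 (Metric.tendsto_nhds.1 hu (δ / 2) (by positivity))
  have hhead : Tendsto (fun i => ∑ n ∈ range M, |u n - K| * v i n) l (𝓝 0) := by
    simpa using tendsto_finsetSum (range M) fun n _ => (hzero n).const_mul |u n - K|
  filter_upwards [hv, hsum, hhead.eventually_lt_const (half_pos hδ)] with i hvi hsumi hheadi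
  have hbound : ∀ n, ‖(u n - K) * v i n‖ ≤
      (range M : Set ℕ).indicator (fun n => |u n - K| * v i n) n + δ / 2 * v i n := fun n => by
    rw [norm_mul, norm_of_nonneg (hvi n), norm_eq_abs]
    by_cases hn : n ∈ range M
    · rw [Set.indicator_of_mem (mem_coe.2 hn)]
      exact le_add_of_nonneg_right (mul_nonneg (by positivity) (hvi n))
    · rw [Set.indicator_of_notMem (mt mem_coe.1 hn), zero_add]
      exact mul_le_mul_of_nonneg_right
        (hM n (not_lt.1 (mt mem_range.2 hn))).le (hvi n)
  have hmajorant := (hasSum_sum_of_ne_finset_zero (s := range M)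
    (f := (range M : Set ℕ).indicator fun n => |u n - K| * v i n)
    fun n hn => Set.indicator_of_notMem (mt mem_coe.1 hn) _).add (hsumi.mul_left (δ / 2))
  have hdiff : Summable fun n => (u n - K) * v i n := hmajorant.summable.of_norm_bounded hbound
  have htsum : ∑' n, u n * v i n = ∑' n, (u n - K) * v i n + K := by
    refine ((hdiff.hasSum.add (hsumi.mul_left K)).congr_fun fun n => ?_).tsum_eq.trans
      (by rw [mul_one])
    ring
  rw [dist_eq, htsum, add_sub_cancel_right, ← norm_eq_abs]
  calc ‖∑' n, (u n - K) * v i n‖ ≤ _ := tsum_of_norm_bounded hmajorant hbound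
    _ = ∑ n ∈ range M, |u n - K| * v i n + δ / 2 := by
      rw [mul_one, sum_congr rfl fun n hn => Set.indicator_of_mem (mem_coe.2 hn) _]
    _ < δ := by linarith

/-- **Abel's limit theorem** for general decreasing weights. -/
theorem tendsto_of_hasSum_mul_antitone {ι : Type*} {l : Filter ι} {a : ℕ → ℝ} {w : ι → ℕ → ℝ}
    {F : ι → ℝ} {K : ℝ} (ha : Tendsto (fun N => ∑ n ∈ range N, a n) atTop (𝓝 K))
    (hF : ∀ᶠ i in l, HasSum (fun n => a n * w i n) (F i)) (hanti : ∀ᶠ i in l, Antitone (w i))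
    (hzero : ∀ᶠ i in l, Tendsto (w i) atTop (𝓝 0)) (hw0 : ∀ i, w i 0 = 1)
    (hone : ∀ n, Tendsto (w · n) l (𝓝 1)) : Tendsto F l (𝓝 K) := by
  set A : ℕ → ℝ := fun N => ∑ n ∈ range N, a n with hA
  have hA1 : Tendsto (fun n => A (n + 1)) atTop (𝓝 K) := ha.comp (tendsto_add_atTop_nat 1)
  have hv : ∀ᶠ i in l, 0 ≤ fun n => w i n - w i (n + 1) := by
    filter_upwards [hanti] with i hi n using sub_nonneg.2 (hi n.le_succ)
  have hv1 : ∀ᶠ i in l, HasSum (fun n => w i n - w i (n + 1)) 1 := by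
    filter_upwards [hv, hzero] with i hvi hi0
    rw [hasSum_iff_tendsto_nat_of_nonneg hvi]
    simpa only [sum_range_sub', hw0, sub_zero] using hi0.const_sub 1
  refine (tendsto_tsum_mul_of_hasSum_one hA1 hv hv1 fun n => by
    simpa using (hone n).sub (hone (n + 1))).congr' ?_
  filter_upwards [hF, hv1, hzero] with i hFi hv1i hi0
  have hsummable : Summable fun n => A (n + 1) * (w i n - w i (n + 1)) := by
    obtain ⟨C, hC⟩ := hA1.norm.bddAbove_range
    refine (hv1i.summable.norm.mul_left C).of_norm_bounded fun n => ?_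
    rw [norm_mul]
    gcongr
    exact hC ⟨n, rfl⟩
  have hparts (N : ℕ) : ∑ n ∈ range (N + 1), a n * w i n =
      w i N * A (N + 1) + ∑ n ∈ range N, A (n + 1) * (w i n - w i (n + 1)) := by
    have h := sum_range_by_parts (w i) a (N + 1)
    simp only [smul_eq_mul, add_tsub_cancel_right] at h
    simp only [mul_comm (a _), h, hA, sub_eq_add_neg, ← sum_neg_distrib]
    congr 1
    exact sum_congr rfl fun n _ => by ring
  have hlim := (hi0.mul hA1).add hsummable.hasSum.tendsto_sum_nat
  simp only [zero_mul, zero_add, ← hparts] at hlim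
  exact tendsto_nhds_unique hlim (hFi.tendsto_sum_nat.comp (tendsto_add_atTop_nat 1))

/-- The powers `2 ^ k` with `1 ≤ k`. The term `1 / k` of the harmonic series is placed at `2 ^ k`,
where it reads `log 2 / log n`. -/
def properPowersOfTwo : Set ℕ := Set.range fun k : ℕ => 2 ^ (k + 1)

lemma injective_two_pow_succ : Function.Injective fun k : ℕ => 2 ^ (k + 1) :=
  (Nat.pow_right_injective le_rfl).comp Nat.succ_injective

lemma sum_range_indicator_properPowersOfTwo (g : ℕ → ℝ) (N : ℕ) :
    ∑ n ∈ range (N + 1), properPowersOfTwo.indicator g n =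
      ∑ k ∈ range (Nat.log 2 N), g (2 ^ (k + 1)) := by
  classical
  have himage : {n ∈ range (N + 1) | n ∈ properPowersOfTwo} =
      (range (Nat.log 2 N)).image fun k => 2 ^ (k + 1) := by
    ext n
    simp only [properPowersOfTwo, mem_filter, mem_range, Set.mem_range, mem_image]
    constructor
    · rintro ⟨hn, k, rfl⟩
      have := Nat.le_log_of_pow_le one_lt_two (Nat.lt_succ_iff.1 hn)
      exact ⟨k, by lia, rfl⟩
    · rintro ⟨k, hk, rfl⟩
      have hN : N ≠ 0 := by
        rintro rfl
        simp at hk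
      exact ⟨Nat.lt_succ_iff.2 (Nat.pow_le_of_le_log hN hk), k, rfl⟩
  simp only [Set.indicator_apply, ← sum_filter, himage, sum_image injective_two_pow_succ.injOn]

lemma sum_range_indicator_prime (g : ℕ → ℝ) (N : ℕ) :
    ∑ n ∈ range (N + 1), {n | n.Prime}.indicator g n = ∑ p ∈ N.primesLE, g p := by
  simp only [Set.indicator_apply, Set.mem_ofPred_eq, ← sum_filter, Nat.primesLE, Nat.primesBelow]

lemma abs_log_two_mul_natLog_sub_log_le (N : ℕ) :
    |log 2 * Nat.log 2 N - log N| ≤ log 2 := by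
  have hlog2 : 0 < log 2 := log_pos one_lt_two
  rcases N.eq_zero_or_pos with rfl | hN
  · simp [hlog2.le]
  have hle : log ((2 : ℝ) ^ Nat.log 2 N) ≤ log N :=
    log_le_log (by positivity) (mod_cast Nat.pow_log_le_self 2 hN.ne')
  have hge : log N ≤ log ((2 : ℝ) ^ (Nat.log 2 N + 1)) :=
    log_le_log (by positivity) (mod_cast (Nat.lt_pow_succ_log_self one_lt_two N).le)
  rw [log_pow] at hle hge
  push_cast at hge
  rw [abs_le]
  constructor <;> linarith

/-- The general term of the series with partial sums `∑ p ≤ N, 1 / p - H_{⌊log₂ N⌋}`. -/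
noncomputable def primeHarmonicTerm (n : ℕ) : ℝ :=
  {n : ℕ | n.Prime}.indicator (fun n => (n : ℝ)⁻¹) n -
    properPowersOfTwo.indicator (fun n => log 2 / log n) n

lemma log_two_div_log_two_pow (k : ℕ) : log 2 / log (2 ^ k : ℕ) = (k : ℝ)⁻¹ := by
  have : log 2 ≠ 0 := (log_pos one_lt_two).ne'
  rw [Nat.cast_pow, Nat.cast_ofNat, log_pow]
  field_simp

lemma sum_range_primeHarmonicTerm (N : ℕ) :
    ∑ n ∈ range (N + 1), primeHarmonicTerm n =
      ∑ p ∈ N.primesLE, (p : ℝ)⁻¹ - harmonic (Nat.log 2 N) := by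
  simp only [primeHarmonicTerm, sum_sub_distrib, sum_range_indicator_prime,
    sum_range_indicator_properPowersOfTwo, log_two_div_log_two_pow, harmonic, Rat.cast_sum,
    Rat.cast_inv, Rat.cast_natCast]

lemma primeHarmonicTerm_eq_inv_log_mul (n : ℕ) :
    primeHarmonicTerm n = (log (max n 2 : ℕ))⁻¹ *
      ({n : ℕ | n.Prime}.indicator (fun n => log n / n) n -
        properPowersOfTwo.indicator (fun _ => log 2) n) := by
  rcases lt_or_ge n 2 with hn | hn
  · have hprime : n ∉ {n : ℕ | n.Prime} := fun h => hn.not_ge h.two_le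
    have hpow : n ∉ properPowersOfTwo := by
      rintro ⟨k, rfl⟩
      exact hn.not_ge (Nat.le_self_pow k.succ_ne_zero 2)
    simp [primeHarmonicTerm, hprime, hpow]
  · have hlog : log n ≠ 0 := (log_pos (mod_cast hn)).ne'
    classical
    rw [max_eq_left hn, primeHarmonicTerm]
    simp only [Set.indicator_apply]
    split_ifs <;> field_simp <;> ring

theorem cauchySeq_sum_primeHarmonicTerm :
    CauchySeq fun N => ∑ n ∈ range N, primeHarmonicTerm n := by
  obtain ⟨C, hC⟩ := exists_abs_sum_log_div_prime_sub_log_le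
  have hlog2 : 0 < log 2 := log_pos one_lt_two
  simp only [primeHarmonicTerm_eq_inv_log_mul, ← smul_eq_mul]
  refine Antitone.cauchySeq_series_mul_of_tendsto_zero_of_bounded (b := C + log 2)
    (fun m n hmn => ?_) ?_ fun N => ?_
  · have hm : (2 : ℝ) ≤ (max m 2 : ℕ) := mod_cast le_max_right m 2
    have hlog : 0 < log (max m 2 : ℕ) := log_pos (by linarith)
    gcongr
  · exact tendsto_inv_atTop_zero.comp (tendsto_log_atTop.comp
      (tendsto_natCast_atTop_atTop.comp (tendsto_atTop_mono (le_max_left · 2) tendsto_id)))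
  · rcases N with _ | N
    · simpa using (add_pos_of_nonneg_of_pos ((abs_nonneg _).trans (hC 0)) hlog2).le
    · rw [sum_sub_distrib, sum_range_indicator_prime, sum_range_indicator_properPowersOfTwo,
        sum_const, card_range, nsmul_eq_mul, mul_comm, norm_eq_abs,
        ← sub_sub_sub_cancel_right _ _ (log N)]
      exact (abs_sub _ _).trans (add_le_add (hC N) (abs_log_two_mul_natLog_sub_log_le N))

lemma two_rpow_one_sub_lt_one {s : ℝ} (hs : 1 < s) : (2 : ℝ) ^ (1 - s) < 1 :=
  rpow_lt_one_of_one_lt_of_neg one_lt_two (by linarith)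

lemma hasSum_properPowersOfTwo_mul_rpow {s : ℝ} (hs : 1 < s) :
    HasSum (fun n : ℕ => properPowersOfTwo.indicator (fun n => log 2 / log n) n *
      ((max n 1 : ℕ) : ℝ) ^ (1 - s)) (-log (1 - 2 ^ (1 - s))) := by
  have hseries := hasSum_pow_div_log_of_abs_lt_one (x := 2 ^ (1 - s))
    (by rw [abs_of_pos (by positivity)]; exact two_rpow_one_sub_lt_one hs)
  rw [← injective_two_pow_succ.hasSum_iff]
  · refine hseries.congr_fun fun k => ?_
    rw [Function.comp_apply, properPowersOfTwo, Set.indicator_of_mem (Set.mem_range_self k),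
      log_two_div_log_two_pow, max_eq_left Nat.one_le_two_pow, Nat.cast_pow, Nat.cast_ofNat,
      ← rpow_pow_comm two_pos.le]
    push_cast
    ring
  · intro n hn
    rw [properPowersOfTwo, Set.indicator_of_notMem hn, zero_mul]

/-- The contribution `∑ (k ≥ 2), p ^ (-k s) / k` of the proper powers of the prime `p` to the
logarithm of the Euler product of `ζ(s)`; it is `0` at non-primes. -/
noncomputable def primePowerTerm (s : ℝ) : ℕ → ℝ :=
  {n : ℕ | n.Prime}.indicator fun n => -log (1 - (n : ℝ) ^ (-s)) - (n : ℝ) ^ (-s)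

lemma prime_rpow_neg_le_half {p : ℕ} (hp : p.Prime) {s : ℝ} (hs : 1 ≤ s) :
    (p : ℝ) ^ (-s) ≤ 1 / 2 := by
  have hp2 : (2 : ℝ) ≤ p := mod_cast hp.two_le
  calc (p : ℝ) ^ (-s) ≤ (p : ℝ) ^ (-1 : ℝ) := by gcongr; linarith
    _ = (p : ℝ)⁻¹ := rpow_neg_one _
    _ ≤ 1 / 2 := by rw [one_div]; gcongr

lemma abs_neg_log_one_sub_sub_le {x : ℝ} (h0 : 0 ≤ x) (h1 : x ≤ 1 / 2) :
    |-log (1 - x) - x| ≤ 2 * x ^ 2 := by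
  have habs : |x| < 1 := by rw [abs_of_nonneg h0]; linarith
  have h := abs_log_sub_add_sum_range_le habs 1
  simp only [sum_range_one, zero_add, pow_one, Nat.cast_zero, div_one, abs_of_nonneg h0] at h
  calc |-log (1 - x) - x| = |x + log (1 - x)| := by rw [← abs_neg]; ring_nf
    _ ≤ x ^ 2 / (1 - x) := h
    _ ≤ x ^ 2 / (1 / 2) := by gcongr; linarith
    _ = 2 * x ^ 2 := by ring

lemma norm_primePowerTerm_le {s : ℝ} (hs : 1 ≤ s) (n : ℕ) :
    ‖primePowerTerm s n‖ ≤ 2 * (n : ℝ) ^ (-2 : ℝ) := by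
  by_cases hn : n ∈ {n : ℕ | n.Prime}
  · have hprime : n.Prime := hn
    have hn1 : (1 : ℝ) ≤ n := mod_cast hprime.one_le
    rw [primePowerTerm, Set.indicator_of_mem hn]
    refine (abs_neg_log_one_sub_sub_le (by positivity) (prime_rpow_neg_le_half hprime hs)).trans ?_
    rw [← rpow_natCast, ← rpow_mul (by positivity)]
    gcongr
    push_cast
    linarith
  · rw [primePowerTerm, Set.indicator_of_notMem hn, norm_zero]
    positivity

lemma summable_two_mul_rpow_neg_two : Summable fun n : ℕ => 2 * (n : ℝ) ^ (-2 : ℝ) :=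
  (summable_nat_rpow.2 (by norm_num)).mul_left 2

lemma summable_primePowerTerm {s : ℝ} (hs : 1 ≤ s) : Summable (primePowerTerm s) :=
  summable_two_mul_rpow_neg_two.of_norm_bounded (norm_primePowerTerm_le hs)

lemma continuousOn_tsum_primePowerTerm :
    ContinuousOn (fun s => ∑' n, primePowerTerm s n) (Set.Ici 1) := by
  refine continuousOn_tsum (fun n => ?_) summable_two_mul_rpow_neg_two
    fun n s hs => norm_primePowerTerm_le hs n
  by_cases hn : n ∈ {n : ℕ | n.Prime}
  · have hprime : n.Prime := hn
    simp only [primePowerTerm, Set.indicator_of_mem hn]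
    have hrpow : ContinuousOn (fun s : ℝ => (n : ℝ) ^ (-s)) (Set.Ici 1) :=
      ((continuous_const_rpow (mod_cast hprime.ne_zero)).comp continuous_neg).continuousOn
    refine ((continuousOn_const.sub hrpow).log fun s hs => ne_of_gt ?_).neg.sub hrpow
    exact sub_pos.2 ((prime_rpow_neg_le_half hprime hs).trans_lt (by norm_num))
  · simpa only [primePowerTerm, Set.indicator_of_notMem hn] using
      continuousOn_const

theorem hasSum_indicator_prime_neg_log_one_sub {s : ℝ} (hs : 1 < s) :
    HasSum ({n : ℕ | n.Prime}.indicator fun n => -log (1 - (n : ℝ) ^ (-s)))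
      (log (∑' n : ℕ, 1 / (n : ℝ) ^ s)) := by
  let f : ℕ →*₀ ℝ :=
    { toFun n := (n : ℝ) ^ (-s)
      map_zero' := by simp [zero_rpow (show -s ≠ 0 by linarith)]
      map_one' := by simp
      map_mul' m n := by push_cast; exact mul_rpow m.cast_nonneg n.cast_nonneg }
  have hsum : Summable (‖f ·‖) := (summable_nat_rpow.2 (neg_lt_neg hs)).norm
  have hpos : 0 < ∑' n, f n :=
    hsum.of_norm.tsum_pos (fun n => rpow_nonneg n.cast_nonneg _) 1 (by simp)
  have htsum : ∑' n, f n = ∑' n : ℕ, 1 / (n : ℝ) ^ s :=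
    tsum_congr fun n => (rpow_neg n.cast_nonneg s).trans (one_div _).symm
  have hfactor {p : ℕ} (hp : p.Prime) : 0 < 1 - f p :=
    sub_pos.2 ((prime_rpow_neg_le_half hp hs.le).trans_lt (by norm_num))
  have hterm (n : ℕ) : 0 ≤ {n : ℕ | n.Prime}.indicator (fun n => -log (1 - f n)) n :=
    Set.indicator_apply_nonneg fun hn => neg_nonneg.2 <| log_nonpos (hfactor hn).le <|
      sub_le_self 1 (rpow_nonneg n.cast_nonneg _)
  refine (hasSum_iff_tendsto_nat_of_nonneg hterm _).2 ?_
  rw [← htsum]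
  refine ((continuousAt_log hpos.ne').tendsto.comp
    (EulerProduct.eulerProduct_completely_multiplicative hsum)).congr fun N => ?_
  rw [Function.comp_apply, log_prod fun p hp =>
    inv_ne_zero (hfactor (Nat.prime_of_mem_primesBelow hp)).ne']
  simp only [log_inv, Nat.primesBelow, sum_filter, Set.indicator_apply, Set.mem_ofPred_eq]

lemma hasSum_primeHarmonicTerm_mul_rpow {s : ℝ} (hs : 1 < s) :
    HasSum (fun n : ℕ => primeHarmonicTerm n * ((max n 1 : ℕ) : ℝ) ^ (1 - s))
      (log (∑' n : ℕ, 1 / (n : ℝ) ^ s) + log (1 - 2 ^ (1 - s)) - ∑' n, primePowerTerm s n) := by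
  rw [add_sub_right_comm, ← sub_neg_eq_add]
  refine (((hasSum_indicator_prime_neg_log_one_sub hs).sub
    (summable_primePowerTerm hs.le).hasSum).sub
      (hasSum_properPowersOfTwo_mul_rpow hs)).congr_fun fun n => ?_
  rw [primeHarmonicTerm, sub_mul]
  congr 1
  by_cases hn : n ∈ {n : ℕ | n.Prime}
  · have hprime : n.Prime := hn
    simp only [primePowerTerm, Set.indicator_of_mem hn, sub_sub_cancel]
    rw [max_eq_left hprime.one_le, ← rpow_neg_one, ← rpow_add (mod_cast hprime.pos)]
    ring_nf
  · simp only [primePowerTerm, Set.indicator_of_notMem hn, sub_zero, zero_mul]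

lemma tendsto_one_sub_two_rpow_div_sub_one :
    Tendsto (fun s : ℝ => (1 - (2 : ℝ) ^ (1 - s)) / (s - 1)) (𝓝[>] 1) (𝓝 (log 2)) := by
  have h : HasDerivAt (fun s : ℝ => -(2 : ℝ) ^ (1 - s)) (log 2) 1 :=
    (((hasDerivAt_id (1 : ℝ)).const_sub 1).const_rpow two_pos).neg.congr_deriv (by simp)
  refine (h.tendsto_slope.mono_left (nhdsGT_le_nhdsNE 1)).congr fun s => ?_
  rw [slope_def_field, sub_self, rpow_zero]
  ring

lemma tendsto_log_tsum_add_log_one_sub :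
    Tendsto (fun s : ℝ => log (∑' n : ℕ, 1 / (n : ℝ) ^ s) + log (1 - 2 ^ (1 - s)))
      (𝓝[>] 1) (𝓝 (log (log 2))) := by
  have hlog2 : 0 < log 2 := log_pos one_lt_two
  have hmul := (tendsto_sub_mul_tsum_nat_rpow.mul tendsto_one_sub_two_rpow_div_sub_one).log
    (by simpa using hlog2.ne')
  rw [one_mul] at hmul
  refine hmul.congr' ?_
  filter_upwards [self_mem_nhdsWithin, tendsto_sub_mul_tsum_nat_rpow.eventually_const_lt one_pos]
    with s hs hpos
  have hs : 0 < s - 1 := sub_pos.2 hs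
  have htwo := two_rpow_one_sub_lt_one (sub_pos.1 hs)
  rw [← log_mul (pos_of_mul_pos_right hpos hs.le).ne' (by linarith)]
  congr 1
  field_simp

theorem tendsto_sum_primeHarmonicTerm :
    Tendsto (fun N => ∑ n ∈ range N, primeHarmonicTerm n) atTop
      (𝓝 (log (log 2) - ∑' n, primePowerTerm 1 n)) := by
  obtain ⟨K, hK⟩ := cauchySeq_tendsto_of_complete cauchySeq_sum_primeHarmonicTerm
  have hs : ∀ᶠ s : ℝ in 𝓝[>] 1, 1 < s := self_mem_nhdsWithin
  have hbase (n : ℕ) : (1 : ℝ) ≤ (max n 1 : ℕ) := mod_cast le_max_right n 1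
  have hAbel := tendsto_of_hasSum_mul_antitone (l := 𝓝[>] (1 : ℝ))
    (w := fun s n => ((max n 1 : ℕ) : ℝ) ^ (1 - s)) hK
    (hs.mono fun s hs => hasSum_primeHarmonicTerm_mul_rpow hs)
    (hs.mono fun s hs m n hmn => rpow_le_rpow_of_nonpos (by linarith [hbase m])
      (mod_cast max_le_max_right 1 hmn) (by linarith))
    (hs.mono fun s hs => by
      simpa [Function.comp_def] using (tendsto_rpow_neg_atTop (sub_pos.2 hs)).comp
        (tendsto_natCast_atTop_atTop.comp (tendsto_atTop_mono (le_max_left · 1) tendsto_id)))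
    (by simp) fun n => by
      have hcont : Continuous fun s : ℝ => ((max n 1 : ℕ) : ℝ) ^ (1 - s) :=
        (continuous_const_rpow (by linarith [hbase n])).comp (continuous_sub_left 1)
      simpa using (hcont.tendsto 1).mono_left nhdsWithin_le_nhds
  have htail := (continuousOn_tsum_primePowerTerm 1 Set.self_mem_Ici).mono_left
    (nhdsWithin_mono 1 Set.Ioi_subset_Ici_self)
  rwa [tendsto_nhds_unique hAbel (tendsto_log_tsum_add_log_one_sub.sub htail)] at hK

lemma tendsto_natLog_two_atTop : Tendsto (Nat.log 2) atTop atTop :=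
  tendsto_atTop_atTop.2 fun k => ⟨2 ^ k, fun _ hn => Nat.le_log_of_pow_le one_lt_two hn⟩

lemma tendsto_log_natCast_atTop : Tendsto (fun N : ℕ => log N) atTop atTop :=
  tendsto_log_atTop.comp tendsto_natCast_atTop_atTop

lemma tendsto_natLog_two_div_log :
    Tendsto (fun N : ℕ => (Nat.log 2 N : ℝ) / log N) atTop (𝓝 (log 2)⁻¹) := by
  have hlog2 : log 2 ≠ 0 := (log_pos one_lt_two).ne'
  have hsmall : Tendsto (fun N : ℕ => (log 2 * Nat.log 2 N - log N) / log N) atTop (𝓝 0) := by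
    refine squeeze_zero_norm (fun N => ?_) (tendsto_log_natCast_atTop.const_div_atTop (log 2))
    rw [norm_div, norm_eq_abs, norm_of_nonneg (log_natCast_nonneg N)]
    exact div_le_div_of_nonneg_right (abs_log_two_mul_natLog_sub_log_le N) (log_natCast_nonneg N)
  have hlim := (hsmall.add_const 1).const_mul (log 2)⁻¹
  rw [zero_add, mul_one] at hlim
  refine hlim.congr' ?_
  filter_upwards [tendsto_log_natCast_atTop.eventually_gt_atTop 0] with N hN
  field_simp
  ring

lemma tendsto_log_natLog_two_sub_log_log :
    Tendsto (fun N : ℕ => log (Nat.log 2 N) - log (log N)) atTop (𝓝 (-log (log 2))) := by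
  have hlim := tendsto_natLog_two_div_log.log (inv_ne_zero (log_pos one_lt_two).ne')
  rw [log_inv] at hlim
  refine hlim.congr' ?_
  filter_upwards [tendsto_log_natCast_atTop.eventually_gt_atTop 0,
    tendsto_natLog_two_atTop.eventually_gt_atTop 0] with N hN hL
  exact log_div (mod_cast hL.ne') hN.ne'

/-- **Mertens' third theorem**, in logarithmic form. -/
theorem tendsto_sum_neg_log_one_sub_inv_prime_sub_log_log :
    Tendsto (fun N : ℕ => ∑ p ∈ N.primesLE, -log (1 - (p : ℝ)⁻¹) - log (log N))
      atTop (𝓝 eulerMascheroniConstant) := by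
  have h := (((tendsto_sum_primeHarmonicTerm.comp (tendsto_add_atTop_nat 1)).add
    ((summable_primePowerTerm le_rfl).hasSum.tendsto_sum_nat.comp (tendsto_add_atTop_nat 1))).add
    (tendsto_harmonic_sub_log.comp tendsto_natLog_two_atTop)).add
    tendsto_log_natLog_two_sub_log_log
  rw [show ∀ x y z : ℝ, x - y + y + z + -x = z by intros; ring] at h
  refine h.congr fun N => ?_
  simp only [Function.comp_apply, sum_range_primeHarmonicTerm, primePowerTerm,
    sum_range_indicator_prime, rpow_neg_one, sum_sub_distrib]
  ring

/-- The proportion of the integers that are free of prime factors `p ≤ n`. -/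
noncomputable def mertensProduct (n : ℕ) : ℝ :=
  ∏ p ∈ n.primesLE, (1 - (p : ℝ)⁻¹)

/-- **Mertens' third theorem**. -/
theorem tendsto_mertensProduct_mul_log :
    Tendsto (fun N : ℕ => mertensProduct N * log N) atTop
      (𝓝 (exp (-eulerMascheroniConstant))) := by
  refine ((continuous_exp.tendsto _).comp
    tendsto_sum_neg_log_one_sub_inv_prime_sub_log_log.neg).congr' ?_
  filter_upwards [eventually_gt_atTop 1] with N hN
  have hlog : 0 < log N := log_pos (mod_cast hN)
  rw [Function.comp_apply, sum_neg_distrib, neg_sub, sub_neg_eq_add, add_comm, exp_add,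
    exp_log hlog, exp_sum, mertensProduct]
  congr 1
  refine prod_congr rfl fun p hp => exp_log (sub_pos.2 ?_)
  exact inv_lt_one_of_one_lt₀ (mod_cast Nat.one_lt_of_mem_primesLE hp)

lemma totient_primorial_div (n : ℕ) :
    ((primorial n).totient : ℝ) / primorial n = mertensProduct n := by
  have h := congrArg (Rat.cast : ℚ → ℝ) (Nat.totient_eq_mul_prod_factors (primorial n))
  rw [primeFactors_primorial] at h
  push_cast at h
  rw [h, mul_div_cancel_left₀ _ (mod_cast primorial_ne_zero n), mertensProduct]

lemma card_filter_coprime_Ico_mul (Q n k : ℕ) :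
    #{u ∈ Ico n (n + Q * k) | Q.Coprime u} = k * Q.totient := by
  induction k with
  | zero => simp
  | succ k ih =>
    rw [← Ico_union_Ico_eq_Ico (Nat.le_add_right n (Q * k)) (by gcongr; lia), filter_union,
      card_union_of_disjoint (disjoint_filter_filter (Ico_disjoint_Ico_consecutive _ _ _)), ih,
      mul_add_one Q, ← add_assoc, Nat.filter_coprime_Ico_eq_totient, add_one_mul]

lemma ncard_isCoprime_sub_inter_Ico (Q k : ℕ) (c n : ℤ) :
    ({t : ℤ | IsCoprime (Q : ℤ) (t - c)} ∩ Set.Ico n (n + Q * k)).ncard = k * Q.totient := by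
  rcases Q.eq_zero_or_pos with rfl | hQ
  · simp
  obtain ⟨m, hm⟩ := Int.eq_ofNat_of_zero_le (Int.emod_nonneg (n - c) (by lia : (Q : ℤ) ≠ 0))
  have hn : n = m + (c + Q * ((n - c) / Q)) := by linarith [Int.emod_add_mul_ediv (n - c) Q]
  set q := (n - c) / Q
  have hcop (u : ℕ) : IsCoprime (Q : ℤ) (u + (c + Q * q) - c) ↔ Q.Coprime u := by
    rw [show (u + (c + Q * q) - c : ℤ) = u + Q * q by ring, IsCoprime.add_mul_left_right_iff,
      Nat.isCoprime_iff_coprime]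
  have himage : {t : ℤ | IsCoprime (Q : ℤ) (t - c)} ∩ Set.Ico n (n + Q * k) =
      (fun u : ℕ => (u + (c + Q * q) : ℤ)) ''
        ({u ∈ Ico m (m + Q * k) | Q.Coprime u} : Finset ℕ) := by
    ext t
    simp only [coe_filter, mem_Ico]
    constructor
    · rintro ⟨ht, hle, hlt⟩
      obtain ⟨u, hu⟩ := Int.eq_ofNat_of_zero_le (show 0 ≤ t - (c + Q * q) by lia)
      obtain rfl : t = u + (c + Q * q) := by lia
      exact ⟨u, ⟨by lia, (hcop u).1 ht⟩, rfl⟩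
    · rintro ⟨u, ⟨hu, hcu⟩, rfl⟩
      exact ⟨(hcop u).2 hcu, by lia, by lia⟩
  rw [himage, Set.ncard_image_of_injective _ fun u v h => by simpa using h, Set.ncard_coe_finset,
    card_filter_coprime_Ico_mul]

/-- The counting function `x ↦ |A ∩ [1, x]|`. -/
noncomputable def countUpTo (A : Set ℤ) (x : ℕ) : ℕ := (A ∩ Set.Icc 1 (x : ℤ)).ncard

lemma lowerDensity_eq_liminf_countUpTo (A : Set ℤ) :
    lowerDensity A = liminf (fun x : ℕ => (countUpTo A x : ℝ) / x) atTop := rfl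

lemma countUpTo_mono {A A' : Set ℤ} (h : A ⊆ A') (x : ℕ) : countUpTo A x ≤ countUpTo A' x :=
  Set.ncard_le_ncard (Set.inter_subset_inter_left _ h) ((Set.finite_Icc _ _).inter_of_right _)

lemma countUpTo_le (A : Set ℤ) (x : ℕ) : countUpTo A x ≤ x := by
  calc countUpTo A x ≤ (Set.Icc 1 (x : ℤ)).ncard :=
        Set.ncard_le_ncard Set.inter_subset_right (Set.finite_Icc _ _)
    _ = x := by rw [← coe_Icc, Set.ncard_coe_finset, Int.card_Icc]; simp

lemma countUpTo_union_le (A A' : Set ℤ) (x : ℕ) :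
    countUpTo (A ∪ A') x ≤ countUpTo A x + countUpTo A' x := by
  rw [countUpTo, Set.union_inter_distrib_right]
  exact Set.ncard_union_le _ _

lemma countUpTo_coe_le_card (F : Finset ℤ) (x : ℕ) : countUpTo F x ≤ #F := by
  rw [← Set.ncard_coe_finset]
  exact Set.ncard_le_ncard Set.inter_subset_left F.finite_toSet

lemma countUpTo_preimage_sub_le (A : Set ℤ) (b : ℤ) (x : ℕ) :
    countUpTo ((· - b) ⁻¹' A) x ≤ countUpTo A x + b.natAbs := by
  have hsub : (· - b) '' (((· - b) ⁻¹' A) ∩ Set.Icc 1 (x : ℤ)) ⊆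
      A ∩ Set.Icc 1 (x : ℤ) ∪ (Icc (1 - b) 0 ∪ Icc (x + 1) (x - b) : Finset ℤ) := by
    rintro _ ⟨t, ⟨htA, ht1, htx⟩, rfl⟩
    by_cases hmem : t - b ∈ Set.Icc 1 (x : ℤ)
    · exact Or.inl ⟨htA, hmem⟩
    · right
      simp only [Set.mem_Icc, coe_union, coe_Icc, Set.mem_union] at hmem ⊢
      lia
  rw [countUpTo, ← Set.ncard_image_of_injective _ (sub_left_injective (b := b))]
  refine (Set.ncard_le_ncard hsub (((Set.finite_Icc _ _).inter_of_right _).union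
    (finite_toSet _))).trans ((Set.ncard_union_le _ _).trans (Nat.add_le_add_left ?_ _))
  rw [Set.ncard_coe_finset]
  refine (card_union_le _ _).trans ?_
  simp only [Int.card_Icc]
  lia

lemma countUpTo_le_of_forall_exists_sub_mem {T A : Set ℤ} {B : Finset ℤ}
    (h : ∀ t ∈ T, ∃ b ∈ B, t - b ∈ A) (x : ℕ) :
    countUpTo T x ≤ #B * countUpTo A x + ∑ b ∈ B, b.natAbs := by
  calc countUpTo T x ≤ countUpTo (⋃ b ∈ B, (· - b) ⁻¹' A) x :=
        countUpTo_mono (fun t ht => by simpa using h t ht) x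
    _ ≤ ∑ b ∈ B, countUpTo ((· - b) ⁻¹' A) x := by
        rw [countUpTo, Set.iUnion₂_inter]
        exact B.set_ncard_biUnion_le _
    _ ≤ ∑ b ∈ B, (countUpTo A x + b.natAbs) :=
        sum_le_sum fun b _ => countUpTo_preimage_sub_le A b x
    _ = #B * countUpTo A x + ∑ b ∈ B, b.natAbs := by
        rw [sum_add_distrib, sum_const, smul_eq_mul]

lemma totient_div_mul_sub_totient_le_countUpTo (Q : ℕ) (c : ℤ) (x : ℕ) :
    (Q.totient : ℝ) / Q * x - Q.totient ≤ countUpTo {t | IsCoprime (Q : ℤ) (t - c)} x := by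
  have hfloor : (x : ℝ) / Q - 1 ≤ (x / Q : ℕ) := by
    rw [← Nat.floor_div_eq_div (K := ℝ)]
    linarith [Nat.lt_floor_add_one ((x : ℝ) / Q)]
  have hcount : x / Q * Q.totient ≤ countUpTo {t | IsCoprime (Q : ℤ) (t - c)} x := by
    rw [← ncard_isCoprime_sub_inter_Ico Q (x / Q) c 1]
    refine Set.ncard_le_ncard (Set.inter_subset_inter_right _ fun t ht => ?_)
      ((Set.finite_Icc _ _).inter_of_right _)
    have hle : (Q : ℤ) * (x / Q : ℕ) ≤ x := mod_cast Nat.mul_div_le x Q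
    exact ⟨ht.1, by linarith [ht.2]⟩
  calc (Q.totient : ℝ) / Q * x - Q.totient = (x / Q - 1) * Q.totient := by ring
    _ ≤ (x / Q : ℕ) * Q.totient := by gcongr
    _ ≤ _ := mod_cast hcount

lemma isBoundedUnder_ge_countUpTo_div (A : Set ℤ) :
    IsBoundedUnder (· ≥ ·) atTop fun x : ℕ => (countUpTo A x : ℝ) / x :=
  isBoundedUnder_of ⟨0, fun _ => by positivity⟩

lemma isCoboundedUnder_ge_countUpTo_div (A : Set ℤ) :
    IsCoboundedUnder (· ≥ ·) atTop fun x : ℕ => (countUpTo A x : ℝ) / x :=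
  (isBoundedUnder_of (r := (· ≤ ·)) ⟨1, fun x => div_le_one_of_le₀
    (mod_cast countUpTo_le A x) x.cast_nonneg⟩).isCoboundedUnder_ge

lemma le_lowerDensity_of_forall_mul_sub_le {A : Set ℤ} {d C : ℝ}
    (h : ∀ x : ℕ, d * x - C ≤ countUpTo A x) : d ≤ lowerDensity A := by
  have hlim : Tendsto (fun x : ℕ => d - C / x) atTop (𝓝 d) := by
    simpa using (tendsto_const_div_atTop_nhds_zero_nat C).const_sub d
  rw [lowerDensity_eq_liminf_countUpTo, ← hlim.liminf_eq]
  refine liminf_le_liminf ?_ hlim.isBoundedUnder_ge (isCoboundedUnder_ge_countUpTo_div A)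
  filter_upwards [eventually_gt_atTop 0] with x hx
  have hx : (0 : ℝ) < x := mod_cast hx
  rw [le_div_iff₀ hx, sub_mul, div_mul_cancel₀ _ hx.ne']
  exact h x

lemma lowerDensity_nonneg (A : Set ℤ) : 0 ≤ lowerDensity A :=
  le_lowerDensity_of_forall_mul_sub_le (C := 0) fun x => by simp

lemma lowerDensity_le_of_forall_le_mul_add {A : Set ℤ} {K : ℕ} (hK : 0 < K) {d C : ℝ}
    (h : ∀ j : ℕ, countUpTo A (K * j) ≤ d * (K * j) + C) : lowerDensity A ≤ d := by
  have hlim : Tendsto (fun x : ℕ => d + C / x) atTop (𝓝 d) := by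
    simpa using (tendsto_const_div_atTop_nhds_zero_nat C).const_add d
  have hmul : Tendsto (fun j : ℕ => K * j) atTop atTop := tendsto_id.const_mul_atTop' hK
  refine le_of_forall_pos_le_add fun δ hδ => ?_
  refine liminf_le_of_frequently_le (hmul.frequently (Eventually.frequently ?_))
    (isBoundedUnder_ge_countUpTo_div A)
  filter_upwards [hmul.eventually (hlim.eventually_le_const (lt_add_of_pos_right d hδ)),
    eventually_gt_atTop 0] with j hj hj0
  have hKj : (0 : ℝ) < (K * j : ℕ) := mod_cast Nat.mul_pos hK hj0
  refine le_trans ?_ hj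
  rw [div_le_iff₀ hKj, add_mul, div_mul_cancel₀ _ hKj.ne']
  exact_mod_cast h j

theorem totient_div_div_card_le_lowerDensity {Q : ℕ} {c : ℤ} {B F : Finset ℤ} {A : Set ℤ}
    (hB : B.Nonempty)
    (h : ∀ t ∉ F, IsCoprime (Q : ℤ) (t - c) → ∃ b ∈ B, t - b ∈ A) :
    (Q.totient : ℝ) / Q / #B ≤ lowerDensity A := by
  set T : Set ℤ := {t | IsCoprime (Q : ℤ) (t - c)}
  have hB : (0 : ℝ) < #B := mod_cast hB.card_pos
  have hsub : T ⊆ F ∪ T \ F := by rw [Set.union_sdiff_self]; exact Set.subset_union_right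
  have hcount (x : ℕ) : countUpTo T x ≤ #F + (#B * countUpTo A x + ∑ b ∈ B, b.natAbs) :=
    (countUpTo_mono hsub x).trans <| (countUpTo_union_le _ _ x).trans <|
      add_le_add (countUpTo_coe_le_card F x)
        (countUpTo_le_of_forall_exists_sub_mem (fun t ht => h t ht.2 ht.1) x)
  refine le_lowerDensity_of_forall_mul_sub_le
    (C := (Q.totient + #F + ∑ b ∈ B, b.natAbs : ℕ) / #B) fun x => ?_
  rw [div_mul_eq_mul_div, ← sub_div, div_le_iff₀ hB]
  have hx : (countUpTo T x : ℝ) ≤ #F + (#B * countUpTo A x + ∑ b ∈ B, b.natAbs : ℕ) :=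
    mod_cast hcount x
  have hT := totient_div_mul_sub_totient_le_countUpTo Q c x
  push_cast at hx ⊢
  linarith

/-- The integers `a` with `a - 1` coprime to `Q` that lie in one of the blocks
`[P m i, P m i + P)`, i.e. in every `m`-th interval of length `P`. -/
def coprimeBlocks (Q P m : ℕ) : Set ℤ :=
  {a : ℤ | IsCoprime (Q : ℤ) (a - 1) ∧ (m : ℤ) ∣ a / P}

lemma countUpTo_coprimeBlocks_le {P Q : ℕ} (m j : ℕ) (hP : 0 < P) (hQP : Q ∣ P) (hm : 0 < m) :
    countUpTo (coprimeBlocks Q P m) (P * m * j) ≤ (j + 1) * (P / Q * Q.totient) := by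
  have hsub : coprimeBlocks Q P m ∩ Set.Icc 1 ((P * m * j : ℕ) : ℤ) ⊆
      ⋃ i ∈ range (j + 1), {a : ℤ | IsCoprime (Q : ℤ) (a - 1)} ∩
        Set.Ico (P * m * i : ℤ) (P * m * i + Q * (P / Q : ℕ)) := by
    rintro a ⟨⟨hcop, i, hi⟩, ha1, haj⟩
    have hP : (0 : ℤ) < P := mod_cast hP
    have hm : (0 : ℤ) < m := mod_cast hm
    have hlo : P * m * i ≤ a := by
      rw [mul_assoc, ← hi]
      exact Int.mul_ediv_self_le hP.ne'
    have hhi : a < P * m * i + P := by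
      rw [mul_assoc, ← hi]
      exact Int.lt_mul_ediv_self_add hP
    lift i to ℕ using (by
      have : 0 ≤ m * i := hi ▸ Int.ediv_nonneg (by lia) hP.le
      exact nonneg_of_mul_nonneg_right this hm)
    have hij : i ≤ j := by
      have := hlo.trans haj
      push_cast at this
      exact_mod_cast le_of_mul_le_mul_left this (by positivity)
    simp only [Set.mem_iUnion]
    refine ⟨i, mem_range.2 (by lia), hcop, hlo, ?_⟩
    rwa [← Nat.cast_mul Q, Nat.mul_div_cancel' hQP]
  calc countUpTo (coprimeBlocks Q P m) (P * m * j) ≤ _ :=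
        Set.ncard_le_ncard hsub ((range (j + 1)).finite_toSet.biUnion fun _ _ =>
          (Set.finite_Ico _ _).inter_of_right _)
    _ ≤ ∑ _i ∈ range (j + 1), P / Q * Q.totient :=
        (set_ncard_biUnion_le _ _).trans
          (sum_le_sum fun i _ => (ncard_isCoprime_sub_inter_Ico Q (P / Q) 1 _).le)
    _ = (j + 1) * (P / Q * Q.totient) := by rw [sum_const, card_range, smul_eq_mul]

lemma lowerDensity_coprimeBlocks_le {P Q m : ℕ} (hP : 0 < P) (hm : 0 < m) (hQP : Q ∣ P) :
    lowerDensity (coprimeBlocks Q P m) ≤ (Q.totient : ℝ) / Q / m := by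
  have hQ0 : (Q : ℝ) ≠ 0 := mod_cast (Nat.pos_of_dvd_of_pos hQP hP).ne'
  have hm0 : (m : ℝ) ≠ 0 := mod_cast hm.ne'
  refine lowerDensity_le_of_forall_le_mul_add (C := (P / Q * Q.totient : ℕ)) (Nat.mul_pos hP hm)
    fun j => ?_
  calc (countUpTo (coprimeBlocks Q P m) (P * m * j) : ℝ) ≤ ((j + 1) * (P / Q * Q.totient) : ℕ) :=
        mod_cast countUpTo_coprimeBlocks_le m j hP hQP hm
    _ = _ := by
        push_cast [Nat.cast_div hQP hQ0]
        field_simp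

lemma exists_forall_intCast_ne_of_card_lt {p : ℕ} [NeZero p] {B : Finset ℤ} (h : #B < p) :
    ∃ r : ZMod p, ∀ b ∈ B, (b : ZMod p) ≠ r := by
  obtain ⟨r, -, hr⟩ := exists_mem_notMem_of_card_lt_card
    (s := B.image (Int.cast : ℤ → ZMod p)) (t := univ)
    (card_image_le.trans_lt (by rwa [card_univ, ZMod.card]))
  exact ⟨r, fun b hb hbr => hr (mem_image.2 ⟨b, hb, hbr⟩)⟩

lemma admissibleSet_of_forall_intCast_ne {B : Finset ℤ} (c : ℤ)
    (h : ∀ p ∈ (#B).primesLE, ∀ b ∈ B, (b : ZMod p) ≠ c) : AdmissibleSet B := by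
  intro p hp
  have : NeZero p := ⟨hp.ne_zero⟩
  rcases le_or_gt p #B with hle | hlt
  · exact ⟨c, h p (Nat.mem_primesLE.2 ⟨hle, hp⟩)⟩
  · exact exists_forall_intCast_ne_of_card_lt hlt

lemma AdmissibleSet.exists_int_forall_intCast_ne {B : Set ℤ} (hB : AdmissibleSet B) (n : ℕ) :
    ∃ c : ℤ, ∀ p ∈ n.primesLE, ∀ b ∈ B, (b : ZMod p) ≠ c := by
  choose r hr using hB
  obtain ⟨c, hc⟩ := Nat.chineseRemainderOfFinset
    (fun p => if hp : p.Prime then (r p hp).val else 0) id n.primesLE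
    (fun p hp => (Nat.prime_of_mem_primesLE hp).ne_zero)
    (fun p hp q hq hpq => (Nat.coprime_primes (Nat.prime_of_mem_primesLE hp)
      (Nat.prime_of_mem_primesLE hq)).2 hpq)
  refine ⟨c, fun p hp b hb => ?_⟩
  have hprime := Nat.prime_of_mem_primesLE hp
  have : NeZero p := ⟨hprime.ne_zero⟩
  have hcp := hc p hp
  rw [dif_pos hprime, id, ← ZMod.natCast_eq_natCast_iff, ZMod.natCast_zmod_val] at hcp
  rw [Int.cast_natCast, hcp]
  exact hr p hprime b hb

lemma isCoprime_primorial_iff {n : ℕ} {t : ℤ} :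
    IsCoprime (primorial n : ℤ) t ↔ ∀ p ∈ n.primesLE, (t : ZMod p) ≠ 0 := by
  rw [primorial_eq_prod_primesLE, Nat.cast_prod, IsCoprime.prod_left_iff]
  refine forall₂_congr fun p hp => ?_
  rw [(Nat.prime_iff_prime_int.1 (Nat.prime_of_mem_primesLE hp)).coprime_iff_not_dvd, Ne,
    CharP.intCast_eq_zero_iff (ZMod p) p]

lemma admissibleSet_insert_of_isCoprime_sub {B : Finset ℤ} {c t : ℤ}
    (hc : ∀ p ∈ (#B + 1).primesLE, ∀ b ∈ B, (b : ZMod p) ≠ c)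
    (ht : IsCoprime (primorial (#B + 1) : ℤ) (t - c)) :
    AdmissibleSet (insert t (B : Set ℤ)) := by
  rw [← coe_insert]
  refine admissibleSet_of_forall_intCast_ne c fun p hp b hb => ?_
  replace hp : p ∈ (#B + 1).primesLE := Nat.primesLE_mono (card_insert_le _ _) hp
  rcases mem_insert.1 hb with rfl | hb
  · simpa [sub_eq_zero] using isCoprime_primorial_iff.1 ht p hp
  · exact hc p hp b hb

/-- Every admissible one-element extension `B ∪ {t}` of `B` has `t ∈ B + A`. -/
def CoversExtensions (B : Finset ℤ) (A : Set ℤ) : Prop :=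
  ∀ t ∉ B, AdmissibleSet (insert t (B : Set ℤ)) → ∃ b ∈ B, t - b ∈ A

theorem CoversExtensions.mertensProduct_div_card_le_lowerDensity {B : Finset ℤ} {A : Set ℤ}
    (hA : CoversExtensions B A) (hB : AdmissibleSet B) (hne : B.Nonempty) :
    mertensProduct (#B + 1) / #B ≤ lowerDensity A := by
  obtain ⟨c, hc⟩ := hB.exists_int_forall_intCast_ne (#B + 1)
  rw [← totient_primorial_div]
  exact totient_div_div_card_le_lowerDensity (F := B) hne fun t ht hcop =>
    hA t ht (admissibleSet_insert_of_isCoprime_sub hc hcop)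

/-- A natural number prime to all `p ≤ ℓ` and congruent to `j` modulo those not dividing `j`. -/
def coprimeShift (ℓ j : ℕ) : ℕ := j + ∏ p ∈ ℓ.primesLE with ¬ p ∣ j, p

lemma coprimeShift_cast_of_not_dvd {ℓ j p : ℕ} (hp : p ∈ ℓ.primesLE) (hpj : ¬ p ∣ j) :
    (coprimeShift ℓ j : ZMod p) = j := by
  have hdvd : p ∣ ∏ q ∈ ℓ.primesLE with ¬ q ∣ j, q :=
    dvd_prod_of_mem _ (mem_filter.2 ⟨hp, hpj⟩)
  rw [coprimeShift, Nat.cast_add, (ZMod.natCast_eq_zero_iff _ p).2 hdvd, add_zero]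

lemma coprimeShift_cast_ne_zero {ℓ p : ℕ} (j : ℕ) (hp : p ∈ ℓ.primesLE) :
    (coprimeShift ℓ j : ZMod p) ≠ 0 := by
  by_cases hpj : p ∣ j
  · have hprime := Nat.prime_of_mem_primesLE hp
    rw [Ne, ZMod.natCast_eq_zero_iff, coprimeShift, Nat.dvd_add_right hpj,
      hprime.prime.dvd_finsetProd_iff]
    rintro ⟨q, hq, hpq⟩
    rw [mem_filter] at hq
    rw [(Nat.prime_dvd_prime_iff_eq hprime (Nat.prime_of_mem_primesLE hq.1)).1 hpq] at hpj
    exact hq.2 hpj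
  · rwa [coprimeShift_cast_of_not_dvd hp hpj, Ne, ZMod.natCast_eq_zero_iff]

/-- The integers `-1 - P k` for `k < m`. -/
def negProgression (P m : ℕ) : Finset ℤ := (range m).image fun k : ℕ => -1 - (P : ℤ) * k

lemma card_negProgression {P : ℕ} (hP : 0 < P) (m : ℕ) : #(negProgression P m) = m := by
  rw [negProgression, card_image_of_injective, card_range]
  intro k l h
  simpa [hP.ne'] using h

/-- The integers `coprimeShift ℓ j` with `1 ≤ j ≤ y`; for `y ≤ ℓ` they meet every nonzero class
modulo every prime `p ≤ y`. -/
def residueCover (y ℓ : ℕ) : Finset ℤ := (Icc 1 y).image fun j => (coprimeShift ℓ j : ℤ)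

lemma card_residueCover_le (y ℓ : ℕ) : #(residueCover y ℓ) ≤ y :=
  card_image_le.trans (by simp)

lemma exists_mem_residueCover_cast_eq {y ℓ p : ℕ} (hy : y ≤ ℓ) (hp : p ∈ y.primesLE)
    {r : ZMod p} (hr : r ≠ 0) : ∃ b ∈ residueCover y ℓ, (b : ZMod p) = r := by
  have : NeZero p := ⟨(Nat.prime_of_mem_primesLE hp).ne_zero⟩
  have hpos : 0 < r.val := Nat.pos_of_ne_zero ((ZMod.val_ne_zero r).2 hr)
  have hle : r.val ≤ y := r.val_lt.le.trans (Nat.mem_primesLE.1 hp).1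
  refine ⟨_, mem_image_of_mem _ (mem_Icc.2 ⟨hpos, hle⟩), ?_⟩
  rw [Int.cast_natCast, coprimeShift_cast_of_not_dvd (Nat.primesLE_mono hy hp)
    (Nat.not_dvd_of_pos_of_lt hpos r.val_lt), ZMod.natCast_zmod_val]

/-- The near-optimal admissible set of size `ℓ`: `residueCover y ℓ` confines the admissible
extensions to integers prime to `primorial y`, and the remaining elements form a progression. -/
def coverBase (y ℓ : ℕ) : Finset ℤ :=
  negProgression (primorial ℓ) (ℓ - #(residueCover y ℓ)) ∪ residueCover y ℓ

lemma card_coverBase {y ℓ : ℕ} (hy : y ≤ ℓ) : #(coverBase y ℓ) = ℓ := by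
  have hdisj : Disjoint (negProgression (primorial ℓ) (ℓ - #(residueCover y ℓ)))
      (residueCover y ℓ) := by
    refine disjoint_left.2 fun a hneg hpos => ?_
    obtain ⟨k, -, rfl⟩ := mem_image.1 hneg
    obtain ⟨j, -, hj⟩ := mem_image.1 hpos
    have : (0 : ℤ) ≤ primorial ℓ * k := by positivity
    lia
  have := card_residueCover_le y ℓ
  rw [coverBase, card_union_of_disjoint hdisj, card_negProgression (primorial_pos ℓ)]
  lia

lemma coverBase_cast_ne_zero {y ℓ p : ℕ} (hp : p ∈ ℓ.primesLE) {b : ℤ} (hb : b ∈ coverBase y ℓ) :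
    (b : ZMod p) ≠ 0 := by
  have : Fact p.Prime := ⟨Nat.prime_of_mem_primesLE hp⟩
  rcases mem_union.1 hb with hb | hb
  · obtain ⟨k, -, rfl⟩ := mem_image.1 hb
    have hzero : (primorial ℓ : ZMod p) = 0 := by
      rw [ZMod.natCast_eq_zero_iff, primorial_eq_prod_primesLE]
      exact dvd_prod_of_mem _ hp
    simp [hzero]
  · obtain ⟨j, -, rfl⟩ := mem_image.1 hb
    simpa using coprimeShift_cast_ne_zero j hp

lemma admissibleSet_coverBase {y ℓ : ℕ} (hy : y ≤ ℓ) : AdmissibleSet (coverBase y ℓ) := by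
  refine admissibleSet_of_forall_intCast_ne 0 fun p hp b hb => ?_
  rw [card_coverBase hy] at hp
  simpa using coverBase_cast_ne_zero hp hb

lemma sub_primorial_mul_mem_coverBase {y ℓ k : ℕ} (hk : k < ℓ - y) :
    -1 - (primorial ℓ : ℤ) * k ∈ coverBase y ℓ := by
  have := card_residueCover_le y ℓ
  exact mem_union_left _ (mem_image_of_mem _ (mem_range.2 (by lia)))

lemma isCoprime_primorial_of_admissibleSet_insert_coverBase {y ℓ : ℕ} (hy : y ≤ ℓ) {t : ℤ}
    (ht : AdmissibleSet (insert t (coverBase y ℓ : Set ℤ))) : IsCoprime (primorial y : ℤ) t := by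
  rw [isCoprime_primorial_iff]
  intro p hp htp
  obtain ⟨r, hr⟩ := ht p (Nat.prime_of_mem_primesLE hp)
  have hr0 : r ≠ 0 := fun h => hr t (Set.mem_insert _ _) (htp.trans h.symm)
  obtain ⟨b, hb, hbr⟩ := exists_mem_residueCover_cast_eq hy hp hr0
  exact hr b (Set.mem_insert_of_mem _ (mem_union_right _ hb)) hbr

lemma coversExtensions_coverBase_coprimeBlocks {y ℓ : ℕ} (hy : y < ℓ) :
    CoversExtensions (coverBase y ℓ) (coprimeBlocks (primorial y) (primorial ℓ) (ℓ - y)) := by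
  intro t _ ht
  have hm : (0 : ℤ) < (ℓ - y : ℕ) := by lia
  have hP : (primorial ℓ : ℤ) ≠ 0 := mod_cast (primorial_pos ℓ).ne'
  set q : ℤ := (t + 1) / primorial ℓ
  obtain ⟨k, hk : -q % (ℓ - y : ℕ) = k⟩ := Int.eq_ofNat_of_zero_le (Int.emod_nonneg (-q) hm.ne')
  have hkm := Int.emod_lt_of_pos (-q) hm
  refine ⟨_, sub_primorial_mul_mem_coverBase (k := k) (by lia), ?_, ?_⟩
  · obtain ⟨c, hc⟩ : (primorial y : ℤ) ∣ primorial ℓ :=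
      mod_cast primorial_dvd_primorial hy.le
    rw [show t - (-1 - (primorial ℓ : ℤ) * k) - 1 = t + primorial y * (c * k) by rw [hc]; ring,
      IsCoprime.add_mul_left_right_iff]
    exact isCoprime_primorial_of_admissibleSet_insert_coverBase hy.le ht
  · rw [show t - (-1 - (primorial ℓ : ℤ) * k) = t + 1 + primorial ℓ * k by ring,
      Int.add_mul_ediv_left _ _ hP, ← dvd_neg, neg_add', ← hk]
    exact Int.dvd_self_sub_emod

lemma eta_le_lowerDensity {B : Finset ℤ} {A : Set ℤ} (hB : AdmissibleSet B)
    (hA : CoversExtensions B A) : eta #B ≤ lowerDensity A := by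
  refine csInf_le ⟨0, ?_⟩ ⟨B, A, rfl, hB, hA, rfl⟩
  rintro _ ⟨-, A, -, -, -, rfl⟩
  exact lowerDensity_nonneg A

theorem eta_le_mertensProduct_div {y ℓ : ℕ} (hy : y < ℓ) :
    eta ℓ ≤ mertensProduct y / (ℓ - y) := by
  calc eta ℓ = eta #(coverBase y ℓ) := by rw [card_coverBase hy.le]
    _ ≤ lowerDensity (coprimeBlocks (primorial y) (primorial ℓ) (ℓ - y)) :=
        eta_le_lowerDensity (admissibleSet_coverBase hy.le)
          (coversExtensions_coverBase_coprimeBlocks hy)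
    _ ≤ (primorial y).totient / primorial y / (ℓ - y : ℕ) :=
        lowerDensity_coprimeBlocks_le (primorial_pos ℓ) (Nat.sub_pos_of_lt hy)
          (primorial_dvd_primorial hy.le)
    _ = mertensProduct y / (ℓ - y) := by rw [totient_primorial_div, Nat.cast_sub hy.le]

theorem mertensProduct_div_le_eta {ℓ : ℕ} (hℓ : 0 < ℓ) :
    mertensProduct (ℓ + 1) / ℓ ≤ eta ℓ := by
  refine le_csInf ⟨_, coverBase 0 ℓ, _, card_coverBase hℓ.le, admissibleSet_coverBase hℓ.le,
    coversExtensions_coverBase_coprimeBlocks hℓ, rfl⟩ ?_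
  rintro _ ⟨B, A, rfl, hB, hA, rfl⟩
  exact CoversExtensions.mertensProduct_div_card_le_lowerDensity hA hB (card_pos.1 hℓ)

lemma tendsto_mertensProduct_mul_log_of_isEquivalent {α : Type*} {l : Filter α} {y n : α → ℕ}
    (hy : Tendsto y l atTop) (hlog : (fun a => log (y a)) ~[l] fun a => log (n a)) :
    Tendsto (fun a => mertensProduct (y a) * log (n a)) l (𝓝 (exp (-eulerMascheroniConstant))) :=
  (IsEquivalent.refl.mul hlog).tendsto_nhds (tendsto_mertensProduct_mul_log.comp hy)

lemma isEquivalent_log_natCast_succ :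
    (fun n : ℕ => log (n + 1 : ℕ)) ~[atTop] fun n : ℕ => log n := by
  have hsucc : (fun n : ℕ => ((n + 1 : ℕ) : ℝ)) ~[atTop] fun n : ℕ => (n : ℝ) := by
    simpa using (IsEquivalent.refl (u := fun n : ℕ => (n : ℝ))).add_const_of_norm_tendsto_atTop
      (c := 1) (tendsto_norm_atTop_atTop.comp tendsto_natCast_atTop_atTop)
  exact hsucc.log tendsto_natCast_atTop_atTop

lemma isLittleO_log_natCast : (fun n : ℕ => log n) =o[atTop] fun n : ℕ => (n : ℝ) :=
  isLittleO_log_id_atTop.comp_tendsto tendsto_natCast_atTop_atTop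

lemma tendsto_natCast_div_log_atTop : Tendsto (fun n : ℕ => n / log n) atTop atTop := by
  have hpos : ∀ᶠ n : ℕ in atTop, 0 < log n / n := by
    filter_upwards [eventually_gt_atTop 1] with n hn
    exact div_pos (log_pos (mod_cast hn)) (by positivity)
  refine (tendsto_nhdsWithin_iff.2
    ⟨isLittleO_log_natCast.tendsto_div_nhds_zero, hpos⟩).inv_tendsto_nhdsGT_zero.congr fun n => ?_
  rw [Pi.inv_apply, inv_div]

/-- The cutoff `⌊n / log n⌋`, which is `o(n)` but whose logarithm is asymptotic to `log n`. -/
noncomputable def logCutoff (n : ℕ) : ℕ := ⌊n / log n⌋₊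

lemma tendsto_logCutoff : Tendsto logCutoff atTop atTop :=
  tendsto_nat_floor_atTop.comp tendsto_natCast_div_log_atTop

lemma isEquivalent_logCutoff :
    (fun n => (logCutoff n : ℝ)) ~[atTop] fun n : ℕ => n / log n :=
  isEquivalent_nat_floor.comp_tendsto tendsto_natCast_div_log_atTop

lemma isEquivalent_log_logCutoff : (fun n => log (logCutoff n)) ~[atTop] fun n : ℕ => log n := by
  refine (isEquivalent_logCutoff.log tendsto_natCast_div_log_atTop).trans ?_
  have hloglog : (fun n : ℕ => log (log n)) =o[atTop] fun n : ℕ => log n :=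
    isLittleO_log_id_atTop.comp_tendsto tendsto_log_natCast_atTop
  refine (IsEquivalent.refl.sub_isLittleO hloglog).congr_left ?_
  filter_upwards [eventually_gt_atTop 1] with n hn
  exact (log_div (by positivity) (log_pos (mod_cast hn)).ne').symm

lemma isLittleO_logCutoff : (fun n => (logCutoff n : ℝ)) =o[atTop] fun n : ℕ => (n : ℝ) := by
  refine isEquivalent_logCutoff.trans_isLittleO ?_
  simpa [div_eq_mul_inv] using (isBigO_refl (fun n : ℕ => (n : ℝ)) atTop).mul_isLittleO
    ((isLittleO_one_iff ℝ).2 tendsto_log_natCast_atTop.inv_tendsto_atTop)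

lemma eventually_logCutoff_lt : ∀ᶠ n in atTop, logCutoff n < n := by
  filter_upwards [isLittleO_logCutoff.def one_half_pos, eventually_gt_atTop 0] with n hle hn
  have hn : (0 : ℝ) < n := mod_cast hn
  simp only [norm_natCast] at hle
  exact_mod_cast (by linarith : (logCutoff n : ℝ) < n)

lemma tendsto_div_sub_logCutoff :
    Tendsto (fun n : ℕ => (n : ℝ) / (n - logCutoff n)) atTop (𝓝 1) := by
  have h := (IsEquivalent.refl.sub_isLittleO isLittleO_logCutoff).symm
  refine (isEquivalent_iff_tendsto_one ?_).1 h
  filter_upwards [eventually_logCutoff_lt] with n hn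
  exact (sub_pos.2 (mod_cast hn)).ne'

theorem stmt_11 :
    Filter.Tendsto (fun ℓ : ℕ => eta ℓ * ℓ * Real.log ℓ) Filter.atTop
      (nhds (Real.exp (-Real.eulerMascheroniConstant))) := by
  have hlower := tendsto_mertensProduct_mul_log_of_isEquivalent
    (tendsto_add_atTop_nat 1) isEquivalent_log_natCast_succ
  have hupper := (tendsto_mertensProduct_mul_log_of_isEquivalent
    tendsto_logCutoff isEquivalent_log_logCutoff).mul tendsto_div_sub_logCutoff
  rw [mul_one] at hupper
  refine tendsto_of_tendsto_of_tendsto_of_le_of_le' hlower hupper ?_ ?_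
  · filter_upwards [eventually_gt_atTop 0] with ℓ hℓ
    gcongr
    exact (div_le_iff₀ (mod_cast hℓ)).1 (mertensProduct_div_le_eta hℓ)
  · filter_upwards [eventually_logCutoff_lt] with ℓ hℓ
    calc eta ℓ * ℓ * log ℓ
        ≤ mertensProduct (logCutoff ℓ) / (ℓ - logCutoff ℓ) * ℓ * log ℓ := by
          gcongr
          exact eta_le_mertensProduct_div hℓ
      _ = mertensProduct (logCutoff ℓ) * log ℓ * (ℓ / (ℓ - logCutoff ℓ)) := by ring
end

section
/- Assume there exists an integer k ≥ 2 such that every admissible k-tuple of distinct integers contains a Dickson pair, i.e., two elements x_i ≠ x_j such that there are infinitely many integers n with n + x_i and n + x_j both prime. Then there exists a constant C > 0 such that for every real number x, the interval (x, x + C] contains a de Polignac number. -/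
/-- A `k`-tuple of integers is admissible if for every prime `p` its entries
do not cover all residue classes mod `p`. -/
def AdmissibleTuple {k : ℕ} (x : Fin k → ℤ) : Prop :=
  ∀ p : ℕ, p.Prime → ∃ r : ZMod p, ∀ i, (x i : ZMod p) ≠ r

/-- A de Polignac number: an integer `h` such that there are infinitely many primes `p`
with `p + h` also prime. -/
def DePolignac (h : ℤ) : Prop :=
  {p : ℤ | Prime p ∧ Prime (p + h)}.Infinite

/-!
Every tuple of distinct multiples of `k!` is admissible, so by hypothesis a set of multiples of `k!`
no two of which differ by a de Polignac number has fewer than `k` elements. Take such a set `S` of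
maximal size: every multiple of `k!` then differs from some element of `S` by a de Polignac number.
So finitely many translates of the set of de Polignac numbers cover `k!ℤ`, and therefore `ℤ`, and
a set with this property has bounded gaps.
-/

open scoped Finset Nat Pointwise

section Covering

theorem exists_card_le_isCover_of_forall_isSeparated {X : Type*} {U : SetRel X X} [U.IsRefl]
    [U.IsSymm] {s : Set X} {K : ℕ}
    (hK : ∀ N : Finset X, ↑N ⊆ s → U.IsSeparated (N : Set X) → #N ≤ K) :
    ∃ N : Finset X, #N ≤ K ∧ U.IsCover s (N : Set X) := by
  classical
  let P : Set (Finset X) := {N | ↑N ⊆ s ∧ U.IsSeparated (N : Set X)}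
  have hPfin : (Finset.card '' P).Finite :=
    (Set.finite_Iic K).subset (Set.image_subset_iff.2 fun N hN => hK N hN.1 hN.2)
  obtain ⟨N, hN, hmax⟩ :=
    Set.Finite.exists_maximalFor' Finset.card P hPfin ⟨∅, by simp, by simp⟩
  refine ⟨N, hK N hN.1 hN.2, .of_maximal_isSeparated ⟨hN, fun M hM hNM x hx => ?_⟩⟩
  have hsub : (↑(insert x N) : Set X) ⊆ M := by
    simpa only [Finset.coe_insert] using Set.insert_subset hx hNM
  have hcard : #(insert x N) ≤ #N :=
    hmax ⟨hsub.trans hM.1, hM.2.mono_right hsub⟩ (Finset.card_le_card (Finset.subset_insert x N))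
  by_contra hxN
  exact (Finset.card_lt_card (Finset.ssubset_insert hxN)).not_ge hcard

variable {G : Type*} [AddGroup G]

theorem covByVAdd_of_forall_pairwise_notMem {A s : Set G} {K : ℕ} (h0 : 0 ∈ A)
    (hneg : ∀ a ∈ A, -a ∈ A)
    (hK : ∀ F : Finset G, ↑F ⊆ s → (F : Set G).Pairwise (fun x y => -y + x ∉ A) → #F ≤ K) :
    CovByVAdd G K s A := by
  let U : SetRel G G := {(x, y) | -y + x ∈ A}
  have : U.IsRefl := ⟨fun x => by simpa [U] using h0⟩
  have : U.IsSymm := ⟨fun x y hxy => by simpa [U] using hneg _ hxy⟩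
  obtain ⟨F, hFK, hF⟩ := exists_card_le_isCover_of_forall_isSeparated (U := U) hK
  refine ⟨F, mod_cast hFK, fun x hx => ?_⟩
  obtain ⟨y, hy, hxy⟩ := hF hx
  exact ⟨y, hy, -y + x, hxy, by simp⟩

theorem covByVAdd_index (H : AddSubgroup G) [H.FiniteIndex] :
    CovByVAdd G H.index Set.univ (H : Set G) := by
  obtain ⟨S, hS, -⟩ := H.exists_isComplement_left 0
  lift S to Finset G using hS.finite_left
  have hcard : #S = H.index := by simpa using hS.ncard_left
  exact ⟨S, by rw [hcard], hS.add_eq.ge⟩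

theorem exists_forall_exists_mem_Ioc_of_covByVAdd (R : Type*) [Ring R] [LinearOrder R]
    [IsStrictOrderedRing R] [FloorRing R] {A : Set ℤ} {K : ℝ} (hA : CovByVAdd ℤ K Set.univ A) :
    ∃ C : R, 0 < C ∧ ∀ x : R, ∃ a ∈ A, (a : R) ∈ Set.Ioc x (x + C) := by
  obtain ⟨F, -, hF⟩ := hA
  obtain ⟨B, hB⟩ : ∃ B : ℕ, ∀ f ∈ F, f.natAbs ≤ B :=
    ⟨F.sup Int.natAbs, fun f hf => Finset.le_sup (f := Int.natAbs) hf⟩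
  refine ⟨2 * B + 1, by positivity, fun x => ?_⟩
  obtain ⟨f, hf, a, ha, hfa⟩ := hF (Set.mem_univ (⌊x⌋ + 1 + B))
  have hfB := hB f hf
  have hfa : f + a = ⌊x⌋ + 1 + B := hfa
  have hlower : ⌊x⌋ + 1 ≤ a := by lia
  have hupper : a ≤ ⌊x⌋ + (2 * B + 1) := by lia
  refine ⟨a, ha, Int.floor_lt.1 (by lia), ?_⟩
  calc (a : R) ≤ ⌊x⌋ + (2 * B + 1) := mod_cast hupper
    _ ≤ x + (2 * B + 1) := by gcongr; exact Int.floor_le x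

end Covering

section DicksonPairs

/-- A Dickson pair: integers `a`, `b` such that `n + a` and `n + b` are simultaneously prime for
infinitely many integers `n`. As for `DePolignac`, the two entries may coincide. -/
def IsDicksonPair (a b : ℤ) : Prop :=
  {n : ℤ | Prime (n + a) ∧ Prime (n + b)}.Infinite

theorem IsDicksonPair.symm {a b : ℤ} (h : IsDicksonPair a b) : IsDicksonPair b a :=
  h.mono fun _ hn => hn.symm

theorem IsDicksonPair.dePolignac_sub {a b : ℤ} (h : IsDicksonPair a b) : DePolignac (b - a) := by
  refine (h.image (add_left_injective a).injOn).mono ?_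
  rintro _ ⟨n, ⟨ha, hb⟩, rfl⟩
  exact ⟨ha, by simpa using hb⟩

theorem DePolignac.isDicksonPair {h : ℤ} (hh : DePolignac h) : IsDicksonPair 0 h := by
  simpa only [IsDicksonPair, DePolignac, add_zero] using hh

theorem DePolignac.neg {h : ℤ} (hh : DePolignac h) : DePolignac (-h) := by
  simpa using hh.isDicksonPair.symm.dePolignac_sub

theorem dePolignac_zero : DePolignac 0 := by
  refine (Nat.infinite_setOfPred_prime.image Nat.cast_injective.injOn).mono ?_
  rintro _ ⟨p, hp, rfl⟩
  simpa using Nat.prime_iff_prime_int.1 hp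

end DicksonPairs

section Admissible

variable {k : ℕ} {x : Fin k → ℤ}

theorem admissibleTuple_of_forall_prime_le
    (hx : ∀ p : ℕ, p.Prime → p ≤ k → ∃ r : ZMod p, ∀ i, (x i : ZMod p) ≠ r) :
    AdmissibleTuple x := by
  intro p hp
  rcases le_or_gt p k with hpk | hkp
  · exact hx p hp hpk
  have : NeZero p := ⟨hp.ne_zero⟩
  by_contra! hsurj
  have hcard := Fintype.card_le_of_surjective (fun i => (x i : ZMod p)) hsurj
  rw [ZMod.card, Fintype.card_fin] at hcard
  exact hkp.not_ge hcard

theorem admissibleTuple_of_forall_factorial_dvd (hx : ∀ i, (k ! : ℤ) ∣ x i) :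
    AdmissibleTuple x := by
  refine admissibleTuple_of_forall_prime_le fun p hp hpk => ⟨1, fun i => ?_⟩
  have : Fact p.Prime := ⟨hp⟩
  have hpx : (p : ℤ) ∣ x i := (Int.natCast_dvd_natCast.2 (hp.dvd_factorial.2 hpk)).trans (hx i)
  rw [(ZMod.intCast_zmod_eq_zero_iff_dvd _ p).2 hpx]
  exact zero_ne_one

theorem card_lt_of_pairwise_not_dePolignac
    (hk : ∀ x : Fin k → ℤ, Function.Injective x → AdmissibleTuple x →
      ∃ i j : Fin k, x i ≠ x j ∧ IsDicksonPair (x i) (x j))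
    {F : Finset ℤ} (hdvd : ∀ a ∈ F, (k ! : ℤ) ∣ a)
    (hF : (F : Set ℤ).Pairwise fun a b => ¬ DePolignac (a - b)) : #F < k := by
  by_contra! hcard
  obtain ⟨T, hTF, hT⟩ := Finset.exists_subset_card_eq hcard
  let x : Fin k → ℤ := T.orderEmbOfFin hT
  have hxF (i : Fin k) : x i ∈ F := hTF (T.orderEmbOfFin_mem hT i)
  obtain ⟨i, j, hij, hpair⟩ := hk x (T.orderEmbOfFin hT).injective
    (admissibleTuple_of_forall_factorial_dvd fun i => hdvd _ (hxF i))
  exact hF (hxF j) (hxF i) hij.symm hpair.dePolignac_sub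

end Admissible

theorem stmt_13
    (hZhang : ∃ k : ℕ, 2 ≤ k ∧ ∀ x : Fin k → ℤ, Function.Injective x → AdmissibleTuple x →
      ∃ i j : Fin k, x i ≠ x j ∧ {n : ℤ | Prime (n + x i) ∧ Prime (n + x j)}.Infinite) :
    ∃ C : ℝ, 0 < C ∧ ∀ x : ℝ, ∃ h : ℤ, DePolignac h ∧ x < h ∧ (h : ℝ) ≤ x + C := by
  obtain ⟨k, -, hk⟩ := hZhang
  let H : AddSubgroup ℤ := AddSubgroup.zmultiples (k ! : ℤ)
  have : H.FiniteIndex := ⟨by simpa [H, Int.index_zmultiples] using k.factorial_ne_zero⟩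
  have hH : CovByVAdd ℤ k (H : Set ℤ) {h | DePolignac h} := by
    refine covByVAdd_of_forall_pairwise_notMem dePolignac_zero (fun _ => DePolignac.neg)
      fun F hFH hF => ?_
    have hdvd (a : ℤ) (ha : a ∈ F) : (k ! : ℤ) ∣ a := Int.mem_zmultiples_iff.1 (hFH ha)
    simp only [neg_add_eq_sub, Set.mem_ofPred_eq] at hF
    exact (card_lt_of_pairwise_not_dePolignac hk hdvd hF).le
  exact exists_forall_exists_mem_Ioc_of_covByVAdd ℝ ((covByVAdd_index H).trans hH)
end

section
/- There is an absolute constant c > 0 with the following property. Let k ≥ m ≥ 1 be integers. Then there exists x_0 (depending on m and k) such that for all real x ≥ x_0 the following holds: let N_x = {n ∈ ℤ : −x < n ≤ x and gcd(n, ∏_{p ≤ k, p prime} p) = 1}, and let A ⊆ ℤ^m be translation-invariant and permutation-invariant (i.e., closed under adding (t,…,t) for any t ∈ ℤ and under permuting coordinates). If |A ∩ N_x^m| / |N_x|^m > 1 / (8m · C(k−1, m−1)), then |A ∩ ((−2x, 2x] ∩ ℤ)^m| ≥ (log 3m)^{−cm} · x^m / ((k/m) · log log(3k/m))^{m−1},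 where C(n,r) denotes the binomial coefficient. -/
open Filter

/-- `N_x`: the set of integers `n` with `-x < n ≤ x` that are coprime to the product
of the primes up to `k`. -/
def Nset (k : ℕ) (x : ℝ) : Set ℤ :=
  {n : ℤ | -x < (n : ℝ) ∧ (n : ℝ) ≤ x ∧
    Int.gcd n ((∏ p ∈ Finset.filter Nat.Prime (Finset.range (k + 1)), p : ℕ) : ℤ) = 1}

open Finset Real

/-!
Translate every tuple `h` of `A` with entries in `N_x` by every `t` in `(-x, x]`. By translation
invariance each translate `b` is again a tuple of `A`, with entries in `(-2x, 2x]`, so a lower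
bound for the number of `b` follows once every `b` arises from few `t`. Those `t` avoid the
residues of `b` modulo each prime `p ≤ k`, so their density is at most `∏ (1 - ν_p / p)`, where
`ν_p` is the number of residues of `b` modulo `p`. If all `ν_p` were `m` this would be about
`∏ (1 - 1 / p) ^ m`, the density of the tuples with entries in `N_x`.

The loss comes from coincidences among the residues. At primes up to `y ≈ m log (3k / m)` it is at
most the `(m - 1)`-st power of a multiple of `log y`, by Mertens' theorem. At larger primes it is
at most the exponential of twice the coincidences weighted by `1 / p`. Translation does not change
these, and by an exponential moment bound they reach `4m` for at most half as many tuples as the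
density hypothesis provides.
-/

section Mertens

lemma sum_log_mul_div_primesLE_le (n : ℕ) :
    ∑ p ∈ n.primesLE, log p * (n / p : ℕ) ≤ n * log n := by
  calc ∑ p ∈ n.primesLE, log p * (n / p : ℕ)
      = ∑ p ∈ n.primesLE, ArithmeticFunction.vonMangoldt p * (n / p : ℕ) :=
        sum_congr rfl fun p hp => by
          rw [ArithmeticFunction.vonMangoldt_apply_prime (Nat.prime_of_mem_primesLE hp)]
    _ ≤ ∑ d ∈ Ioc 0 n, ArithmeticFunction.vonMangoldt d * (n / d : ℕ) := by
        rw [Nat.primesLE_eq_filter_Ioc_zero]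
        exact sum_le_sum_of_subset_of_nonneg (filter_subset _ _) fun d _ _ =>
          mul_nonneg ArithmeticFunction.vonMangoldt_nonneg (Nat.cast_nonneg _)
    _ = ∑ d ∈ Ioc 0 n, log d := by
        rw [← ArithmeticFunction.sum_Ioc_mul_zeta_eq_sum,
          ArithmeticFunction.vonMangoldt_mul_zeta]
        rfl
    _ ≤ n * log n := by
        have hlog : ∀ d ∈ Ioc 0 n, log d ≤ log n := fun d hd =>
          log_le_log (mod_cast (mem_Ioc.1 hd).1) (mod_cast (mem_Ioc.1 hd).2)
        simpa using sum_le_card_nsmul _ _ _ hlog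

lemma sum_log_div_primesLE_le {n : ℕ} (hn : n ≠ 0) :
    ∑ p ∈ n.primesLE, log p / p ≤ log n + log 4 := by
  have hn' : (0 : ℝ) < n := by positivity
  have htheta : ∑ p ∈ n.primesLE, log p ≤ log 4 * n := by
    rw [← Chebyshev.theta_eq_sum_primesLE_log]
    exact Chebyshev.theta_le_log4_mul_x n.cast_nonneg
  have hterm (p : ℕ) : n * (log p / p) ≤ log p * (n / p : ℕ) + log p := by
    have hfloor : (n : ℝ) / p ≤ (n / p : ℕ) + 1 := by
      simpa [Nat.floor_div_natCast] using (Nat.lt_floor_add_one ((n : ℝ) / p)).le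
    calc n * (log p / p) = log p * (n / p) := by ring
      _ ≤ log p * ((n / p : ℕ) + 1) := by gcongr
      _ = log p * (n / p : ℕ) + log p := by ring
  refine le_of_mul_le_mul_left ?_ hn'
  calc n * ∑ p ∈ n.primesLE, log p / p
      ≤ ∑ p ∈ n.primesLE, log p * (n / p : ℕ) + ∑ p ∈ n.primesLE, log p := by
        rw [mul_sum, ← sum_add_distrib]
        exact sum_le_sum fun p _ => hterm p
    _ ≤ n * log n + log 4 * n := add_le_add (sum_log_mul_div_primesLE_le n) htheta
    _ = n * (log n + log 4) := by ring

lemma tsum_rpow_neg_le {s : ℝ} (hs : 1 < s) :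
    ∑' n : ℕ, (n : ℝ) ^ (-s) ≤ 1 + 1 / (s - 1) := by
  have hsum : Summable fun n : ℕ => (n : ℝ) ^ (-s) := summable_nat_rpow.2 (by linarith)
  have hshift : ∑' n : ℕ, (n : ℝ) ^ (-s) = ∑' n : ℕ, 1 / ((n : ℝ) + 1) ^ s := by
    rw [hsum.tsum_eq_zero_add, Nat.cast_zero, zero_rpow (by linarith), zero_add]
    refine tsum_congr fun n => ?_
    rw [rpow_neg (by positivity), Nat.cast_add_one, one_div]
  have hzeta := ZetaAsymptotics.zeta_limit_aux1 hs
  have hterm : 0 ≤ ZetaAsymptotics.termTSum s := tsum_nonneg fun n =>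
    ZetaAsymptotics.term_nonneg (n + 1) s
  rw [hshift]
  nlinarith

lemma prod_primesLE_one_sub_rpow_neg_inv_le {s : ℝ} (hs : 1 < s) (n : ℕ) :
    ∏ p ∈ n.primesLE, (1 - (p : ℝ) ^ (-s))⁻¹ ≤ 1 + 1 / (s - 1) := by
  have hsum : Summable fun n : ℕ => (n : ℝ) ^ (-s) := summable_nat_rpow.2 (by linarith)
  let f : ℕ →* ℝ :=
    { toFun := fun n => (n : ℝ) ^ (-s)
      map_one' := by simp
      map_mul' := fun a b => by rw [Nat.cast_mul, mul_rpow a.cast_nonneg b.cast_nonneg] }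
  calc ∏ p ∈ n.primesLE, (1 - (p : ℝ) ^ (-s))⁻¹
      = ∑' a : (n + 1).smoothNumbers, (a : ℝ) ^ (-s) :=
        EulerProduct.prod_primesBelow_geometric_eq_tsum_smoothNumbers (f := f) hsum (n + 1)
    _ ≤ ∑' a : ℕ, (a : ℝ) ^ (-s) :=
        hsum.tsum_subtype_le _ _ fun a => rpow_nonneg a.cast_nonneg _
    _ ≤ 1 + 1 / (s - 1) := tsum_rpow_neg_le hs

lemma one_sub_inv_inv_le_mul_exp {p s : ℝ} (hp : 2 ≤ p) (hs : 1 ≤ s) :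
    (1 - p⁻¹)⁻¹ ≤ (1 - p ^ (-s))⁻¹ * exp (2 * (s - 1) * (log p / p)) := by
  have hp0 : 0 < p := by linarith
  have hinv : p⁻¹ ≤ 2⁻¹ := by gcongr
  have hpow_le : p ^ (-s) ≤ p⁻¹ := by
    rw [← rpow_neg_one]
    exact rpow_le_rpow_of_exponent_le (by linarith) (by linarith)
  have hpow_ge : p⁻¹ * (1 - (s - 1) * log p) ≤ p ^ (-s) := by
    rw [show -s = -1 + -(s - 1) by ring, rpow_add hp0, rpow_neg_one, rpow_def_of_pos hp0]
    gcongr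
    linarith [add_one_le_exp (log p * -(s - 1))]
  have hu : 0 ≤ (s - 1) * (log p / p) :=
    mul_nonneg (by linarith) (div_nonneg (log_nonneg (by linarith)) hp0.le)
  rw [inv_mul_eq_div, inv_le_comm₀ (by linarith) (div_pos (exp_pos _) (by linarith)), inv_div,
    div_le_iff₀ (exp_pos _)]
  calc 1 - p ^ (-s) ≤ 1 - p⁻¹ + (s - 1) * (log p / p) := by
        rw [div_eq_inv_mul]
        linarith
    _ ≤ (1 - p⁻¹) * (2 * (s - 1) * (log p / p) + 1) := by nlinarith
    _ ≤ (1 - p⁻¹) * exp (2 * (s - 1) * (log p / p)) :=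
        mul_le_mul_of_nonneg_left (add_one_le_exp _) (by linarith)

-- Rankin's trick: raise the exponent from `1` to `1 + 1 / log n`, at the cost of a bounded factor.
lemma prod_primesLE_one_sub_inv_inv_le {n : ℕ} (hn : 2 ≤ n) :
    ∏ p ∈ n.primesLE, (1 - (p : ℝ)⁻¹)⁻¹ ≤ 3 * exp 6 * log n := by
  have hlog2 : log 2 ≤ log n := log_le_log (by norm_num) (mod_cast hn)
  have hlog_pos : 1 / 2 < log n := by linarith [log_two_gt_d9]
  set s := 1 + 1 / log n with hs
  have hs1 : 1 < s := lt_add_of_pos_right _ (by positivity)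
  have hexp : 2 * (s - 1) * ∑ p ∈ n.primesLE, log p / p ≤ 6 := by
    have hlog4 : log 4 = 2 * log 2 := by
      rw [show (4 : ℝ) = 2 ^ 2 by norm_num, log_pow, Nat.cast_ofNat]
    calc 2 * (s - 1) * ∑ p ∈ n.primesLE, log p / p ≤ 2 * (s - 1) * (3 * log n) := by
          gcongr
          linarith [sum_log_div_primesLE_le (n := n) (by lia)]
      _ = 6 := by
          rw [hs, add_sub_cancel_left]
          field_simp
          norm_num
  calc ∏ p ∈ n.primesLE, (1 - (p : ℝ)⁻¹)⁻¹
      ≤ ∏ p ∈ n.primesLE, (1 - (p : ℝ) ^ (-s))⁻¹ * exp (2 * (s - 1) * (log p / p)) := by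
        refine prod_le_prod (fun p _ => inv_nonneg.2 (sub_nonneg.2 p.cast_inv_le_one))
          fun p hp => one_sub_inv_inv_le_mul_exp ?_ hs1.le
        exact_mod_cast Nat.two_le_of_mem_primesLE hp
    _ = (∏ p ∈ n.primesLE, (1 - (p : ℝ) ^ (-s))⁻¹) *
          exp (2 * (s - 1) * ∑ p ∈ n.primesLE, log p / p) := by
        rw [prod_mul_distrib, ← exp_sum, ← mul_sum]
    _ ≤ (1 + 1 / (s - 1)) * exp 6 := by
        have := prod_primesLE_one_sub_rpow_neg_inv_le hs1 n
        gcongr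
    _ = (1 + log n) * exp 6 := by rw [hs, add_sub_cancel_left, one_div_one_div]
    _ ≤ 3 * log n * exp 6 := by
        gcongr
        linarith
    _ = 3 * exp 6 * log n := by ring

end Mertens

section Coincidences

variable {m : ℕ}

/-- The `m`-tuples with entries in `S`. -/
abbrev tuples {α : Type*} (m : ℕ) (S : Finset α) : Finset (Fin m → α) :=
  Fintype.piFinset fun _ => S

/-- The number of coincidences among the entries of a tuple: its length minus the number of
distinct entries. -/
def coincidences {α : Type*} [DecidableEq α] (s : Fin m → α) : ℕ :=
  m - #(univ.image s)

lemma card_image_univ_le {α : Type*} [DecidableEq α] (s : Fin m → α) : #(univ.image s) ≤ m := by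
  simpa using card_image_le (s := univ) (f := s)

lemma coincidences_le {α : Type*} [DecidableEq α] (s : Fin m → α) : coincidences s ≤ m - 1 := by
  cases m with
  | zero => simp [coincidences]
  | succ m =>
    have hpos : 0 < #(univ.image s) := card_pos.2 (univ_nonempty.image s)
    rw [coincidences]
    lia

lemma coincidences_comp_of_injective {α β : Type*} [DecidableEq α] [DecidableEq β] {f : α → β}
    (hf : Function.Injective f) (s : Fin m → α) : coincidences (f ∘ s) = coincidences s := by
  rw [coincidences, ← image_image, card_image_of_injective _ hf, coincidences]

lemma coincidences_cons {α : Type*} [DecidableEq α] (a : α) (s : Fin m → α) :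
    coincidences (Fin.cons a s : Fin (m + 1) → α) =
      coincidences s + if a ∈ univ.image s then 1 else 0 := by
  have himage : univ.image (Fin.cons a s : Fin (m + 1) → α) = insert a (univ.image s) := by
    ext b
    simp [Fin.exists_fin_succ, eq_comm]
  have hcard := card_image_univ_le s
  rw [coincidences, coincidences, himage, card_insert_eq_ite]
  split_ifs <;> lia

lemma sum_tuples_succ {α M : Type*} [AddCommMonoid M] (S : Finset α)
    (f : (Fin (m + 1) → α) → M) :
    ∑ s ∈ tuples (m + 1) S, f s = ∑ s ∈ tuples m S, ∑ a ∈ S, f (Fin.cons a s) := by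
  rw [← sum_product_right' S (tuples m S) fun a s => f (Fin.cons a s)]
  refine sum_equiv (Fin.consEquiv fun _ => α).symm (fun s => ?_) fun s _ => ?_
  · simp [Fin.forall_fin_succ, Fin.tail]
  · simp [Fin.consEquiv]

lemma sum_pow_coincidences_le {α : Type*} [DecidableEq α] (S : Finset α) {z : ℝ} (hz : 1 ≤ z) :
    ∑ s ∈ tuples m S, z ^ coincidences s ≤ (#S + (z - 1) * m) ^ m := by
  have : 0 ≤ z - 1 := by linarith
  induction m with
  | zero => simp [coincidences]
  | succ m ih =>
    have hinner (s : Fin m → α) : ∑ a ∈ S, z ^ coincidences (Fin.cons a s : Fin (m + 1) → α) ≤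
        z ^ coincidences s * (#S + (z - 1) * m) := by
      have hrepeat : (#(S ∩ univ.image s) : ℝ) ≤ m :=
        mod_cast (card_le_card inter_subset_right).trans (card_image_univ_le s)
      calc ∑ a ∈ S, z ^ coincidences (Fin.cons a s : Fin (m + 1) → α)
          = z ^ coincidences s * ∑ a ∈ S, (1 + if a ∈ univ.image s then z - 1 else 0) := by
            rw [mul_sum]
            refine sum_congr rfl fun a _ => ?_
            rw [coincidences_cons, pow_add]
            split_ifs <;> simp
        _ = z ^ coincidences s * (#S + (z - 1) * #(S ∩ univ.image s)) := by
            rw [sum_add_distrib, sum_ite_mem, sum_const, sum_const, nsmul_one, nsmul_eq_mul,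
              mul_comm (z - 1)]
        _ ≤ z ^ coincidences s * (#S + (z - 1) * m) := by gcongr
    rw [sum_tuples_succ]
    calc ∑ s ∈ tuples m S, ∑ a ∈ S, z ^ coincidences (Fin.cons a s : Fin (m + 1) → α)
        ≤ (∑ s ∈ tuples m S, z ^ coincidences s) * (#S + (z - 1) * m) := by
          rw [sum_mul]
          exact sum_le_sum fun s _ => hinner s
      _ ≤ (#S + (z - 1) * m) ^ m * (#S + (z - 1) * m) := by gcongr
      _ ≤ (#S + (z - 1) * (m + 1 : ℕ)) ^ (m + 1) := by
          rw [← pow_succ]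
          gcongr
          lia

variable {ι : Type*} [Fintype ι] {α : ι → Type*} [∀ i, DecidableEq (α i)]

/-- The coincidences of a family of tuples, the `i`-th tuple being counted with weight `w i`. -/
def weightedCoincidences (w : ι → ℝ) (r : ∀ i, Fin m → α i) : ℝ :=
  ∑ i, w i * coincidences (r i)

-- Markov's inequality for `exp (θ * weightedCoincidences w r)`, whose sum over `r` factorises.
lemma card_le_weightedCoincidences_mul_exp_le [DecidableEq ι] {w : ι → ℝ} (hw : ∀ i, 0 ≤ w i)
    (S : ∀ i, Finset (α i)) {θ : ℝ} (hθ : 0 ≤ θ) (T : ℝ) :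
    #{r ∈ Fintype.piFinset fun i => tuples m (S i) | T ≤ weightedCoincidences w r} *
        exp (θ * T) ≤
      ∏ i, (#(S i) + (exp (θ * w i) - 1) * m) ^ m := by
  have hexp (r : ∀ i, Fin m → α i) :
      exp (θ * weightedCoincidences w r) = ∏ i, exp (θ * w i) ^ coincidences (r i) := by
    simp only [weightedCoincidences, mul_sum, exp_sum, ← exp_nat_mul]
    exact prod_congr rfl fun i _ => congrArg exp (by ring)
  rw [← nsmul_eq_mul]
  calc _ ≤ ∑ r ∈ Fintype.piFinset fun i => tuples m (S i) with T ≤ weightedCoincidences w r,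
          exp (θ * weightedCoincidences w r) :=
        card_nsmul_le_sum _ _ _ fun r hr => by
          gcongr
          exact (mem_filter.1 hr).2
    _ ≤ ∑ r ∈ Fintype.piFinset fun i => tuples m (S i), exp (θ * weightedCoincidences w r) :=
        sum_le_sum_of_subset_of_nonneg (filter_subset _ _) fun _ _ _ => (exp_pos _).le
    _ = ∏ i, ∑ s ∈ tuples m (S i), exp (θ * w i) ^ coincidences s := by
        rw [prod_univ_sum]
        exact sum_congr rfl fun r _ => hexp r
    _ ≤ ∏ i, (#(S i) + (exp (θ * w i) - 1) * m) ^ m :=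
        prod_le_prod (fun _ _ => sum_nonneg fun _ _ => by positivity) fun i _ =>
          sum_pow_coincidences_le (S i) (one_le_exp (mul_nonneg hθ (hw i)))

end Coincidences

section Residues

/-- The integers in `(-x, x]`. -/
noncomputable def symmIoc (x : ℝ) : Finset ℤ := Ioc ⌊-x⌋ ⌊x⌋

lemma mem_symmIoc {x : ℝ} {n : ℤ} : n ∈ symmIoc x ↔ -x < n ∧ (n : ℝ) ≤ x := by
  rw [symmIoc, mem_Ioc, Int.floor_lt, Int.le_floor]

lemma le_card_symmIoc {x : ℝ} (hx : 1 ≤ x) : x ≤ #(symmIoc x) := by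
  have hcard : ((⌊x⌋ - ⌊-x⌋ : ℤ) : ℝ) ≤ #(symmIoc x) := by
    rw [symmIoc, Int.card_Ioc]
    exact mod_cast Int.self_le_toNat _
  push_cast at hcard
  linarith [Int.lt_floor_add_one x, Int.floor_le (-x)]

lemma add_const_mem_tuples_symmIoc {m : ℕ} {x : ℝ} {h : Fin m → ℤ} {t : ℤ}
    (hh : h ∈ tuples m (symmIoc x)) (ht : t ∈ symmIoc x) :
    h + Function.const _ t ∈ tuples m (symmIoc (2 * x)) := by
  rw [mem_symmIoc] at ht
  refine Fintype.mem_piFinset.2 fun j => mem_symmIoc.2 ?_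
  have hj := mem_symmIoc.1 (Fintype.mem_piFinset.1 hh j)
  simp only [Pi.add_apply, Function.const_apply, Int.cast_add]
  constructor <;> linarith

lemma abs_card_Ioc_filter_modEq_sub_le {a b r : ℤ} (hab : a ≤ b) (hr : 0 < r) (v : ℤ) :
    |(#{n ∈ Ioc a b | n ≡ v [ZMOD r]} : ℝ) - (b - a) / r| ≤ 1 := by
  have : (0 : ℚ) < r := mod_cast hr
  have hmono : ⌊((a - v) / r : ℚ)⌋ ≤ ⌊((b - v) / r : ℚ)⌋ := by gcongr
  have hcard : (#{n ∈ Ioc a b | n ≡ v [ZMOD r]} : ℚ) =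
      ⌊((b - v) / r : ℚ)⌋ - ⌊((a - v) / r : ℚ)⌋ := by
    have h := Int.Ioc_filter_modEq_card a b hr v
    rw [max_eq_left (sub_nonneg.2 hmono)] at h
    exact mod_cast h
  have hdiff : ((b - v) / r : ℚ) - (a - v) / r = (b - a) / r := by ring
  have hrat : |(#{n ∈ Ioc a b | n ≡ v [ZMOD r]} : ℚ) - (b - a) / r| ≤ 1 := by
    rw [hcard, abs_le]
    constructor <;>
      linarith [Int.floor_le ((b - v) / r : ℚ), Int.lt_floor_add_one ((b - v) / r : ℚ),
        Int.floor_le ((a - v) / r : ℚ), Int.lt_floor_add_one ((a - v) / r : ℚ)]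
  exact mod_cast (Rat.cast_le (K := ℝ)).2 hrat

variable {ι : Type*} [Fintype ι] {p : ι → ℕ}

lemma exists_forall_intCast_eq_iff_modEq (hcop : Pairwise (Function.onFun Nat.Coprime p))
    (ω : ∀ i, ZMod (p i)) :
    ∃ v : ℤ, ∀ n : ℤ, (∀ i, (n : ZMod (p i)) = ω i) ↔ n ≡ v [ZMOD (∏ i, p i : ℕ)] := by
  let e := ZMod.prodEquivPi p hcop
  obtain ⟨v, hv⟩ := ZMod.intCast_surjective (e.symm ω)
  refine ⟨v, fun n => ?_⟩
  rw [← ZMod.intCast_eq_intCast_iff, hv, ← funext_iff (f := fun i => (n : ZMod (p i)))]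
  have hn : (fun i => (n : ZMod (p i))) = e n := (map_intCast e n).symm
  rw [hn]
  exact (e.toEquiv.eq_symm_apply).symm

variable [∀ i, NeZero (p i)] {x : ℝ}

lemma card_symmIoc_filter_intCast_eq_mem_Icc (hcop : Pairwise (Function.onFun Nat.Coprime p))
    (hx : (∏ i, p i : ℕ) + 1 ≤ x) (ω : ∀ i, ZMod (p i)) :
    (#{n ∈ symmIoc x | ∀ i, (n : ZMod (p i)) = ω i} : ℝ) ∈
      Set.Icc (x / (∏ i, p i : ℕ)) (4 * x / (∏ i, p i : ℕ)) := by
  obtain ⟨v, hv⟩ := exists_forall_intCast_eq_iff_modEq hcop ω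
  have hP : 0 < ∏ i, p i := prod_pos fun i _ => NeZero.pos (p i)
  simp only [hv]
  generalize (∏ i, p i : ℕ) = P at hP hx
  have hP' : (0 : ℝ) < P := mod_cast hP
  have : (1 : ℝ) ≤ P := mod_cast hP
  have hfloor : ⌊-x⌋ ≤ ⌊x⌋ := Int.floor_mono (by linarith)
  have habs := abs_le.1 (abs_card_Ioc_filter_modEq_sub_le hfloor (Nat.cast_pos.2 hP) v)
  have hlower : x / P ≤ (⌊x⌋ - ⌊-x⌋) / P - 1 := by
    rw [div_sub_one hP'.ne']
    gcongr
    linarith [Int.lt_floor_add_one x, Int.floor_le (-x)]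
  have hupper : (⌊x⌋ - ⌊-x⌋) / P + 1 ≤ 4 * x / P := by
    rw [div_add_one hP'.ne']
    gcongr
    linarith [Int.floor_le x, Int.lt_floor_add_one (-x)]
  rw [Int.cast_natCast] at habs
  exact ⟨by rw [symmIoc]; linarith, by rw [symmIoc]; linarith⟩

lemma card_symmIoc_filter_intCast_mem_mem_Icc (hcop : Pairwise (Function.onFun Nat.Coprime p))
    (hx : (∏ i, p i : ℕ) + 1 ≤ x) (S : ∀ i, Finset (ZMod (p i))) :
    (#{n ∈ symmIoc x | ∀ i, (n : ZMod (p i)) ∈ S i} : ℝ) ∈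
      Set.Icc (x * ∏ i, (#(S i) / p i : ℝ)) (4 * x * ∏ i, (#(S i) / p i : ℝ)) := by
  classical
  have hcard : #{n ∈ symmIoc x | ∀ i, (n : ZMod (p i)) ∈ S i} =
      ∑ ω ∈ Fintype.piFinset S, #{n ∈ symmIoc x | ∀ i, (n : ZMod (p i)) = ω i} := by
    rw [card_eq_sum_card_fiberwise (f := fun (n : ℤ) i => (n : ZMod (p i)))
      (t := Fintype.piFinset S)
      fun n hn => mem_coe.2 (Fintype.mem_piFinset.2 (mem_filter.1 (mem_coe.1 hn)).2)]
    refine sum_congr rfl fun ω hω => congrArg card ?_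
    ext n
    simp only [mem_filter, funext_iff, and_assoc, and_congr_right_iff, and_iff_right_iff_imp]
    exact fun _ h i => (h i).symm ▸ Fintype.mem_piFinset.1 hω i
  have hscale (c : ℝ) :
      c * ∏ i, (#(S i) / p i : ℝ) = #(Fintype.piFinset S) • (c / (∏ i, p i : ℕ)) := by
    rw [prod_div_distrib, Fintype.card_piFinset, nsmul_eq_mul]
    push_cast
    ring
  rw [hcard, Nat.cast_sum, hscale, hscale]
  exact ⟨card_nsmul_le_sum _ _ _ fun ω _ => (card_symmIoc_filter_intCast_eq_mem_Icc hcop hx ω).1,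
    sum_le_card_nsmul _ _ _ fun ω _ => (card_symmIoc_filter_intCast_eq_mem_Icc hcop hx ω).2⟩

/-- The residues of a tuple of integers, for each of the moduli `p i`. -/
def residues {ι : Type*} (p : ι → ℕ) {m : ℕ} (h : Fin m → ℤ) (i : ι) (j : Fin m) : ZMod (p i) :=
  h j

lemma card_tuples_filter_residues_mem_le (hcop : Pairwise (Function.onFun Nat.Coprime p))
    (hx : (∏ i, p i : ℕ) + 1 ≤ x) {m : ℕ} (R : Finset (∀ i, Fin m → ZMod (p i)))
    [DecidablePred fun h : Fin m → ℤ => residues p h ∈ R] :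
    (#{h ∈ tuples m (symmIoc x) | residues p h ∈ R} : ℝ) ≤
      #R * (4 * x / (∏ i, p i : ℕ)) ^ m := by
  classical
  rw [card_eq_sum_card_fiberwise (f := residues p) (t := R)
    fun h hh => mem_coe.2 (mem_filter.1 (mem_coe.1 hh)).2, Nat.cast_sum, ← nsmul_eq_mul]
  refine sum_le_card_nsmul _ _ _ fun r _ => ?_
  calc (#{h ∈ {h ∈ tuples m (symmIoc x) | residues p h ∈ R} | residues p h = r} : ℝ)
      ≤ #(Fintype.piFinset fun j => {n ∈ symmIoc x | ∀ i, (n : ZMod (p i)) = r i j}) := by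
        gcongr
        intro h hh
        obtain ⟨htuple, rfl⟩ := mem_filter.1 hh
        have hmem := Fintype.mem_piFinset.1 (mem_filter.1 htuple).1
        exact Fintype.mem_piFinset.2 fun j => mem_filter.2 ⟨hmem j, fun i => rfl⟩
    _ = ∏ j, (#{n ∈ symmIoc x | ∀ i, (n : ZMod (p i)) = r i j} : ℝ) := by
        rw [Fintype.card_piFinset, Nat.cast_prod]
    _ ≤ ∏ _j : Fin m, 4 * x / (∏ i, p i : ℕ) :=
        prod_le_prod (fun _ _ => Nat.cast_nonneg _) fun j _ =>
          (card_symmIoc_filter_intCast_eq_mem_Icc hcop hx fun i => r i j).2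
    _ = (4 * x / (∏ i, p i : ℕ)) ^ m := by
        rw [prod_const, card_univ, Fintype.card_fin]

end Residues

section Sieve

variable {ι : Type*} {m y : ℕ} {q x : ℝ}

/-- The weight `1 / p i` of a coincidence modulo `p i`, set to zero for the moduli up to `y`, where
coincidences are bounded trivially. -/
noncomputable def largeWeight (p : ι → ℕ) (y : ℕ) (i : ι) : ℝ :=
  if y < p i then (p i : ℝ)⁻¹ else 0

lemma largeWeight_nonneg (p : ι → ℕ) (y : ℕ) (i : ι) : 0 ≤ largeWeight p y i := by
  rw [largeWeight]
  split_ifs <;> positivity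

lemma sum_largeWeight_sq_le [Fintype ι] {p : ι → ℕ} (hp : Function.Injective p) (hy : y ≠ 0) :
    ∑ i, largeWeight p y i ^ 2 ≤ (y : ℝ)⁻¹ := by
  have hsub : (univ.filter fun i => y < p i).image p ⊆ Ioc y (y + ∑ i, p i) := by
    refine image_subset_iff.2 fun i hi => mem_Ioc.2 ⟨(mem_filter.1 hi).2, ?_⟩
    exact (single_le_sum (fun _ _ => Nat.zero_le _) (mem_univ i)).trans (Nat.le_add_left _ _)
  calc ∑ i, largeWeight p y i ^ 2
      = ∑ i with y < p i, ((p i : ℝ) ^ 2)⁻¹ := by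
        rw [sum_filter]
        refine sum_congr rfl fun i _ => ?_
        rw [largeWeight]
        split_ifs <;> simp
    _ = ∑ n ∈ (univ.filter fun i => y < p i).image p, ((n : ℝ) ^ 2)⁻¹ :=
        (sum_image (f := fun n : ℕ => ((n : ℝ) ^ 2)⁻¹) hp.injOn).symm
    _ ≤ ∑ n ∈ Ioc y (y + ∑ i, p i), ((n : ℝ) ^ 2)⁻¹ :=
        sum_le_sum_of_subset_of_nonneg hsub fun _ _ _ => by positivity
    _ ≤ (y : ℝ)⁻¹ - ((y + ∑ i, p i : ℕ) : ℝ)⁻¹ := sum_Ioc_inv_sq_le_sub hy (Nat.le_add_right _ _)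
    _ ≤ (y : ℝ)⁻¹ := sub_le_self _ (by positivity)

/-- The coincidences of a tuple modulo each of the `p i` exceeding `y`, weighted by `1 / p i`. -/
noncomputable def largeCoincidences [Fintype ι] (p : ι → ℕ) (y : ℕ) (h : Fin m → ℤ) : ℝ :=
  weightedCoincidences (largeWeight p y) (residues p h)

lemma largeCoincidences_add_const [Fintype ι] (p : ι → ℕ) (y : ℕ) (h : Fin m → ℤ) (t : ℤ) :
    largeCoincidences p y (fun j => h j + t) = largeCoincidences p y h := by
  have hcomp (i : ι) : residues p (fun j => h j + t) i =
      (· + (t : ZMod (p i))) ∘ residues p h i := by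
    funext j
    simp [residues]
  simp only [largeCoincidences, weightedCoincidences, hcomp,
    coincidences_comp_of_injective (add_left_injective _)]

/-- The integers in `(-x, x]` divisible by none of the moduli `p i`. -/
noncomputable def sifted [Fintype ι] (p : ι → ℕ) (x : ℝ) : Finset ℤ :=
  {n ∈ symmIoc x | ∀ i, (n : ZMod (p i)) ≠ 0}

/-- The density of the integers divisible by none of the moduli `p i`, for pairwise coprime
moduli. -/
noncomputable def siftDensity [Fintype ι] (p : ι → ℕ) : ℝ := ∏ i, (1 - (p i : ℝ)⁻¹)

/-- The part of the inverse of `siftDensity p` that comes from the moduli up to `y`. -/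
noncomputable def smallFactor [Fintype ι] (p : ι → ℕ) (y : ℕ) : ℝ :=
  ∏ i with p i ≤ y, (1 - (p i : ℝ)⁻¹)⁻¹

lemma sub_one_add_exp_sub_one_mul_le {a b c : ℝ} (ha : 2 ≤ a) (hb : 0 ≤ b) (hba : b ≤ a)
    (hc : 0 ≤ c) :
    a - 1 + (exp (b * a⁻¹) - 1) * c ≤ (a - 1) * exp (4 * b * c * a⁻¹ ^ 2) := by
  have ha0 : 0 < a := by linarith
  have hsmall : |b * a⁻¹| ≤ 1 := by
    rw [abs_of_nonneg (by positivity), ← div_eq_mul_inv]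
    exact (div_le_one ha0).2 hba
  have hexp : exp (b * a⁻¹) - 1 ≤ 2 * (b * a⁻¹) := by
    simpa [abs_of_nonneg (show 0 ≤ b * a⁻¹ by positivity)] using
      (abs_le.1 (abs_exp_sub_one_le hsmall)).2
  have hhalf : a ≤ 2 * (a - 1) := by linarith
  calc a - 1 + (exp (b * a⁻¹) - 1) * c ≤ a - 1 + 2 * (b * a⁻¹) * c := by gcongr
    _ = a - 1 + a * (2 * b * c * a⁻¹ ^ 2) := by field_simp
    _ ≤ a - 1 + 2 * (a - 1) * (2 * b * c * a⁻¹ ^ 2) := by gcongr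
    _ = (a - 1) * (4 * b * c * a⁻¹ ^ 2 + 1) := by ring
    _ ≤ (a - 1) * exp (4 * b * c * a⁻¹ ^ 2) :=
        mul_le_mul_of_nonneg_left (add_one_le_exp _) (by linarith)

variable {p : ι → ℕ} [∀ i, Fact (1 < p i)]

lemma two_le_natCast (p : ι → ℕ) [∀ i, Fact (1 < p i)] (i : ι) : (2 : ℝ) ≤ p i :=
  mod_cast (Fact.out : 1 < p i)

lemma injective_of_pairwise_coprime (hcop : Pairwise (Function.onFun Nat.Coprime p)) :
    Function.Injective p := fun i j hij => by
  by_contra hne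
  have hone : p i = 1 := (Nat.coprime_self _).1 (by simpa [Function.onFun, ← hij] using hcop hne)
  exact (Fact.out : 1 < p i).ne' hone

lemma card_univ_erase_zero (p : ι → ℕ) [∀ i, Fact (1 < p i)] (i : ι) :
    (#(univ.erase (0 : ZMod (p i))) : ℝ) = p i - 1 := by
  rw [cast_card_erase_of_mem (mem_univ _), card_univ, ZMod.card]

lemma sub_one_add_exp_largeWeight_sub_one_mul_le (hm : m ≠ 0) (hq : 0 < q) (hy : 4 * q * m ≤ y)
    (i : ι) : p i - 1 + (exp (2 * q * largeWeight p y i) - 1) * m ≤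
      (p i - 1) * exp (8 * q * m * largeWeight p y i ^ 2) := by
  have hm1 : (1 : ℝ) ≤ m := mod_cast Nat.one_le_iff_ne_zero.2 hm
  rw [largeWeight]
  split_ifs with hyp
  · have hyp' : (y : ℝ) ≤ p i := mod_cast hyp.le
    convert sub_one_add_exp_sub_one_mul_le (two_le_natCast p i) (b := 2 * q) (by positivity)
      (by nlinarith) m.cast_nonneg using 3
    ring
  · simp

lemma one_sub_inv_inv_le_exp {a : ℝ} (ha : 2 ≤ a) : (1 - a⁻¹)⁻¹ ≤ exp (2 * a⁻¹) := by
  have hinv : a⁻¹ ≤ 2⁻¹ := inv_anti₀ two_pos ha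
  have hinv0 : 0 < a⁻¹ := by positivity
  calc (1 - a⁻¹)⁻¹ ≤ 2 * a⁻¹ + 1 := by
        rw [inv_le_iff_one_le_mul₀ (by linarith)]
        nlinarith
    _ ≤ exp (2 * a⁻¹) := add_one_le_exp _

lemma one_sub_card_image_div_le (i : ι) (s : Fin m → ZMod (p i)) (y : ℕ) :
    1 - (#(univ.image s) : ℝ) / p i ≤
      (1 - (p i : ℝ)⁻¹) ^ m * (if p i ≤ y then (1 - (p i : ℝ)⁻¹)⁻¹ else 1) ^ (m - 1) *
        exp (2 * (largeWeight p y i * coincidences s)) := by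
  have hp := two_le_natCast p i
  have hinv : (p i : ℝ)⁻¹ ≤ 2⁻¹ := inv_anti₀ two_pos hp
  have hpos : 0 < 1 - (p i : ℝ)⁻¹ := by linarith
  have hone : 1 ≤ (1 - (p i : ℝ)⁻¹)⁻¹ :=
    (one_le_inv₀ hpos).2 (sub_le_self _ (inv_nonneg.2 (Nat.cast_nonneg _)))
  calc 1 - (#(univ.image s) : ℝ) / p i = 1 + #(univ.image s) * -(p i : ℝ)⁻¹ := by ring
    _ ≤ (1 + -(p i : ℝ)⁻¹) ^ #(univ.image s) := one_add_mul_le_pow (by linarith) _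
    _ = (1 - (p i : ℝ)⁻¹) ^ m * (1 - (p i : ℝ)⁻¹)⁻¹ ^ coincidences s := by
        rw [← sub_eq_add_neg, coincidences, inv_pow, ← div_eq_mul_inv, eq_div_iff (by positivity),
          ← pow_add, Nat.add_sub_cancel' (card_image_univ_le s)]
    _ ≤ (1 - (p i : ℝ)⁻¹) ^ m * ((if p i ≤ y then (1 - (p i : ℝ)⁻¹)⁻¹ else 1) ^ (m - 1) *
          exp (2 * (largeWeight p y i * coincidences s))) := by
        refine mul_le_mul_of_nonneg_left ?_ (by positivity)
        rw [largeWeight]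
        split_ifs with hle hlt hlt
        · lia
        · simpa using pow_le_pow_right₀ hone (coincidences_le s)
        · rw [one_pow, one_mul, ← mul_assoc, mul_comm, exp_nat_mul]
          exact pow_le_pow_left₀ (by positivity) (one_sub_inv_inv_le_exp hp) _
        · lia
    _ = _ := (mul_assoc _ _ _).symm

lemma card_image_le_modulus (i : ι) (s : Fin m → ZMod (p i)) : #(univ.image s) ≤ p i := by
  simpa [ZMod.card] using card_le_univ (univ.image s)

variable [Fintype ι]

lemma siftDensity_pos (p : ι → ℕ) [∀ i, Fact (1 < p i)] : 0 < siftDensity p :=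
  prod_pos fun i _ => sub_pos.2 (inv_lt_one_of_one_lt₀ (by linarith [two_le_natCast p i]))

lemma smallFactor_nonneg (p : ι → ℕ) [∀ i, Fact (1 < p i)] (y : ℕ) : 0 ≤ smallFactor p y :=
  prod_nonneg fun i _ => inv_nonneg.2 <| sub_nonneg.2 <|
    inv_le_one_of_one_le₀ (by linarith [two_le_natCast p i])

lemma siftDensity_eq_prod_sub_one_div (p : ι → ℕ) [∀ i, Fact (1 < p i)] :
    siftDensity p = ∏ i, ((p i - 1) / p i : ℝ) :=
  prod_congr rfl fun i _ => by
    have := two_le_natCast p i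
    field_simp

lemma siftDensity_mul_le_card_sifted (hcop : Pairwise (Function.onFun Nat.Coprime p))
    (hx : (∏ i, p i : ℕ) + 1 ≤ x) : siftDensity p * x ≤ #(sifted p x) := by
  have h := (card_symmIoc_filter_intCast_mem_mem_Icc hcop hx fun i => univ.erase 0).1
  simp only [card_univ_erase_zero, ← siftDensity_eq_prod_sub_one_div, mem_erase, mem_univ,
    and_true] at h
  rwa [mul_comm]

lemma card_nonzero_largeCoincidences_mul_exp_le [DecidableEq ι] (hp : Function.Injective p)
    (hm : m ≠ 0) (hq : 0 < q) (hy : 4 * q * m ≤ y) :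
    #{r ∈ Fintype.piFinset fun i => tuples m (univ.erase (0 : ZMod (p i))) |
        4 * (m : ℝ) ≤ weightedCoincidences (largeWeight p y) r} * exp (8 * m * q) ≤
      (∏ i, (p i - 1 : ℝ)) ^ m * exp (2 * m) := by
  have : (0 : ℝ) < m := mod_cast Nat.pos_of_ne_zero hm
  have hy0 : (0 : ℝ) < y := lt_of_lt_of_le (by positivity) hy
  have hnonneg (i : ι) : (0 : ℝ) ≤ p i - 1 := by linarith [two_le_natCast p i]
  have hnonneg' (i : ι) : 0 ≤ p i - 1 + (exp (2 * q * largeWeight p y i) - 1) * m :=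
    add_nonneg (hnonneg i) <| mul_nonneg
      (sub_nonneg.2 <| one_le_exp <| mul_nonneg (by positivity) (largeWeight_nonneg p y i))
      m.cast_nonneg
  calc _ = #{r ∈ Fintype.piFinset fun i => tuples m (univ.erase (0 : ZMod (p i))) |
        4 * (m : ℝ) ≤ weightedCoincidences (largeWeight p y) r} * exp (2 * q * (4 * m)) := by
        congr 2
        ring
    _ ≤ ∏ i, (p i - 1 + (exp (2 * q * largeWeight p y i) - 1) * m) ^ m := by
        simpa only [card_univ_erase_zero] using card_le_weightedCoincidences_mul_exp_le
          (largeWeight_nonneg p y) (fun i => univ.erase (0 : ZMod (p i))) (by positivity) (4 * m)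
    _ ≤ ∏ i, ((p i - 1) * exp (8 * q * m * largeWeight p y i ^ 2)) ^ m :=
        prod_le_prod (fun i _ => pow_nonneg (hnonneg' i) m) fun i _ =>
          pow_le_pow_left₀ (hnonneg' i)
            (sub_one_add_exp_largeWeight_sub_one_mul_le hm hq hy i) m
    _ = (∏ i, (p i - 1 : ℝ)) ^ m * exp (m * (8 * q * m * ∑ i, largeWeight p y i ^ 2)) := by
        rw [prod_pow, prod_mul_distrib, mul_pow, ← exp_sum, ← mul_sum, exp_nat_mul]
    _ ≤ (∏ i, (p i - 1 : ℝ)) ^ m * exp (2 * m) := by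
        have hprod : 0 ≤ (∏ i, (p i - 1 : ℝ)) ^ m := pow_nonneg (prod_nonneg fun i _ => hnonneg i) m
        refine mul_le_mul_of_nonneg_left (exp_le_exp.2 ?_) hprod
        calc m * (8 * q * m * ∑ i, largeWeight p y i ^ 2) ≤ m * (8 * q * m * (y : ℝ)⁻¹) := by
              gcongr
              exact sum_largeWeight_sq_le hp (mod_cast hy0.ne')
          _ = 2 * m * (4 * q * m / y) := by ring
          _ ≤ 2 * m := mul_le_of_le_one_right (by positivity) ((div_le_one hy0).2 hy)

lemma card_sifted_filter_le_largeCoincidences_le (hcop : Pairwise (Function.onFun Nat.Coprime p))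
    (hm : m ≠ 0) (hq : 0 < q) (hy : 4 * q * m ≤ y) (hx : (∏ i, p i : ℕ) + 1 ≤ x) :
    (#{h ∈ tuples m (sifted p x) | 4 * (m : ℝ) ≤ largeCoincidences p y h} : ℝ) ≤
      (4 * siftDensity p * x) ^ m * exp (2 * m - 8 * m * q) := by
  classical
  have hx0 : 0 ≤ x := (by positivity : (0 : ℝ) ≤ (∏ i, p i : ℕ) + 1).trans hx
  let R := {r ∈ Fintype.piFinset fun i => tuples m (univ.erase (0 : ZMod (p i))) |
    4 * (m : ℝ) ≤ weightedCoincidences (largeWeight p y) r}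
  have hR : (#R : ℝ) ≤ (∏ i, (p i - 1 : ℝ)) ^ m * exp (2 * m) / exp (8 * m * q) :=
    (le_div_iff₀ (exp_pos _)).2 <| card_nonzero_largeCoincidences_mul_exp_le
      (injective_of_pairwise_coprime hcop) hm hq hy
  calc (#{h ∈ tuples m (sifted p x) | 4 * (m : ℝ) ≤ largeCoincidences p y h} : ℝ)
      ≤ #{h ∈ tuples m (symmIoc x) | residues p h ∈ R} := by
        gcongr
        intro h hh
        obtain ⟨hsifted, hlarge⟩ := mem_filter.1 hh
        have hmem (j : Fin m) := mem_filter.1 (Fintype.mem_piFinset.1 hsifted j)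
        refine mem_filter.2 ⟨Fintype.mem_piFinset.2 fun j => (hmem j).1, mem_filter.2 ⟨?_, hlarge⟩⟩
        exact Fintype.mem_piFinset.2 fun i => Fintype.mem_piFinset.2 fun j =>
          mem_erase.2 ⟨(hmem j).2 i, mem_univ _⟩
    _ ≤ #R * (4 * x / (∏ i, p i : ℕ)) ^ m := card_tuples_filter_residues_mem_le hcop hx R
    _ ≤ (∏ i, (p i - 1 : ℝ)) ^ m * exp (2 * m) / exp (8 * m * q) *
          (4 * x / (∏ i, p i : ℕ)) ^ m := by gcongr
    _ = (4 * siftDensity p * x) ^ m * exp (2 * m - 8 * m * q) := by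
        rw [siftDensity_eq_prod_sub_one_div, prod_div_distrib, exp_sub, Nat.cast_prod]
        ring

lemma prod_one_sub_card_image_div_le (p : ι → ℕ) [∀ i, Fact (1 < p i)] (y : ℕ)
    (h : Fin m → ℤ) :
    ∏ i, (1 - #(univ.image (residues p h i)) / p i : ℝ) ≤
      siftDensity p ^ m * smallFactor p y ^ (m - 1) * exp (2 * largeCoincidences p y h) := by
  rw [largeCoincidences, weightedCoincidences, mul_sum, exp_sum, smallFactor, prod_filter,
    siftDensity, ← prod_pow, ← prod_pow, ← prod_mul_distrib, ← prod_mul_distrib]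
  refine prod_le_prod (fun i _ => sub_nonneg.2 ?_) fun i _ => one_sub_card_image_div_le i _ y
  exact div_le_one_of_le₀ (mod_cast card_image_le_modulus i _) (Nat.cast_nonneg _)

-- `b j - t` is nonzero modulo `p i` for all `j` exactly when `t` avoids the residues of `b`.
lemma card_symmIoc_filter_sub_mem_sifted_le (hcop : Pairwise (Function.onFun Nat.Coprime p))
    (hx : (∏ i, p i : ℕ) + 1 ≤ x) (y : ℕ) (b : Fin m → ℤ) :
    (#{t ∈ symmIoc x | ∀ j, b j - t ∈ sifted p x} : ℝ) ≤
      4 * x * (siftDensity p ^ m * smallFactor p y ^ (m - 1) *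
        exp (2 * largeCoincidences p y b)) := by
  have hx0 : 0 ≤ x := (by positivity : (0 : ℝ) ≤ (∏ i, p i : ℕ) + 1).trans hx
  have hcompl (i : ι) : (#(univ.image (residues p b i))ᶜ / p i : ℝ) =
      1 - #(univ.image (residues p b i)) / p i := by
    have := two_le_natCast p i
    rw [card_compl, ZMod.card, Nat.cast_sub (card_image_le_modulus i _), sub_div,
      div_self (by positivity)]
  calc (#{t ∈ symmIoc x | ∀ j, b j - t ∈ sifted p x} : ℝ)
      ≤ #{t ∈ symmIoc x | ∀ i, (t : ZMod (p i)) ∈ (univ.image (residues p b i))ᶜ} := by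
        gcongr with t
        intro hsifted i
        simp only [mem_compl, mem_image, mem_univ, true_and, not_exists, residues]
        intro j hj
        exact (mem_filter.1 (hsifted j)).2 i (by rw [Int.cast_sub, hj, sub_self])
    _ ≤ 4 * x * ∏ i, (1 - #(univ.image (residues p b i)) / p i : ℝ) := by
        simpa only [hcompl] using (card_symmIoc_filter_intCast_mem_mem_Icc hcop hx
          fun i => (univ.image (residues p b i))ᶜ).2
    _ ≤ _ := by
        gcongr
        exact prod_one_sub_card_image_div_le p y b

lemma card_mul_card_le_of_card_sub_mem_le {T M : Type*} [AddGroup M] [DecidableEq M]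
    {J : Finset T} {G B : Finset M} (f : T → M) {C : ℝ} (hadd : ∀ t ∈ J, ∀ h ∈ G, h + f t ∈ B)
    (hC : ∀ b ∈ B, (#{t ∈ J | b - f t ∈ G} : ℝ) ≤ C) : (#J : ℝ) * #G ≤ #B * C := by
  rw [← nsmul_eq_mul, ← nsmul_eq_mul]
  refine card_nsmul_le_card_nsmul (fun t b => b - f t ∈ G) (fun t ht => Nat.cast_le.2 ?_) hC
  refine card_le_card_of_injOn (· + f t) (fun h hh => ?_) (add_left_injective (f t)).injOn
  exact mem_coe.2 (mem_filter.2 ⟨hadd t ht h hh, by simpa using hh⟩)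

variable {δ : ℝ} {A : Set (Fin m → ℤ)} [DecidablePred (· ∈ A)]

lemma mul_le_card_sifted_filter_largeCoincidences_lt
    (hcop : Pairwise (Function.onFun Nat.Coprime p)) (hm : m ≠ 0) (hq : 0 < q)
    (hy : 4 * q * m ≤ y) (hx : (∏ i, p i : ℕ) + 1 ≤ x)
    (hδ : 4 ^ m * exp (2 * m - 8 * m * q) ≤ δ / 2)
    (hcard : δ * #(sifted p x) ^ m ≤ #{h ∈ tuples m (sifted p x) | h ∈ A}) :
    δ / 2 * (siftDensity p * x) ^ m ≤
      #{h ∈ tuples m (sifted p x) | h ∈ A ∧ largeCoincidences p y h < 4 * m} := by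
  have hx0 : 0 ≤ x := (by positivity : (0 : ℝ) ≤ (∏ i, p i : ℕ) + 1).trans hx
  have hδ0 : 0 ≤ δ := by linarith [show 0 ≤ 4 ^ m * exp (2 * m - 8 * m * q) by positivity]
  have hD := siftDensity_pos p
  have hall : δ * (siftDensity p * x) ^ m ≤ #{h ∈ tuples m (sifted p x) | h ∈ A} :=
    hcard.trans' <| by
      gcongr
      exact siftDensity_mul_le_card_sifted hcop hx
  have hbad : (#{h ∈ tuples m (sifted p x) | 4 * (m : ℝ) ≤ largeCoincidences p y h} : ℝ) ≤
      δ / 2 * (siftDensity p * x) ^ m :=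
    calc _ ≤ (4 * siftDensity p * x) ^ m * exp (2 * m - 8 * m * q) :=
          card_sifted_filter_le_largeCoincidences_le hcop hm hq hy hx
      _ = 4 ^ m * exp (2 * m - 8 * m * q) * (siftDensity p * x) ^ m := by
          rw [mul_assoc 4, mul_pow]
          ring
      _ ≤ δ / 2 * (siftDensity p * x) ^ m := by gcongr
  have hsplit : (#{h ∈ tuples m (sifted p x) | h ∈ A} : ℝ) ≤
      #{h ∈ tuples m (sifted p x) | h ∈ A ∧ largeCoincidences p y h < 4 * m} +
        #{h ∈ tuples m (sifted p x) | 4 * (m : ℝ) ≤ largeCoincidences p y h} := by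
    norm_cast
    refine (card_le_card fun h hh => ?_).trans (card_union_le _ _)
    rw [← filter_or]
    grind
  linarith

theorem mul_pow_le_card_of_translation_invariant
    (hcop : Pairwise (Function.onFun Nat.Coprime p)) (hm : m ≠ 0) (hq : 0 < q)
    (hy : 4 * q * m ≤ y) (hx : (∏ i, p i : ℕ) + 1 ≤ x)
    (hδ : 4 ^ m * exp (2 * m - 8 * m * q) ≤ δ / 2)
    (hA : ∀ h ∈ A, ∀ t : ℤ, (fun i => h i + t) ∈ A)
    (hcard : δ * #(sifted p x) ^ m ≤ #{h ∈ tuples m (sifted p x) | h ∈ A}) :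
    δ * x ^ m ≤ 8 * smallFactor p y ^ (m - 1) * exp (8 * m) *
      #{b ∈ tuples m (symmIoc (2 * x)) | b ∈ A} := by
  let G := {h ∈ tuples m (sifted p x) | h ∈ A ∧ largeCoincidences p y h < 4 * m}
  let B := {b ∈ tuples m (symmIoc (2 * x)) | b ∈ A ∧ largeCoincidences p y b < 4 * m}
  have hδ0 : 0 ≤ δ := by linarith [show 0 ≤ 4 ^ m * exp (2 * m - 8 * m * q) by positivity]
  have hx1 : 1 ≤ x := le_of_add_le_of_nonneg_right hx (Nat.cast_nonneg _)
  have hD := siftDensity_pos p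
  have hE : 0 ≤ smallFactor p y := smallFactor_nonneg p y
  have hadd : ∀ t ∈ symmIoc x, ∀ h ∈ G, h + Function.const _ t ∈ B := by
    intro t ht h hh
    obtain ⟨hsifted, hmem, hlt⟩ := mem_filter.1 hh
    have hsymm : h ∈ tuples m (symmIoc x) := Fintype.piFinset_subset _ _
      (fun _ => filter_subset _ _) hsifted
    exact mem_filter.2 ⟨add_const_mem_tuples_symmIoc hsymm ht, hA h hmem t,
      (largeCoincidences_add_const p y h t).trans_lt hlt⟩
  have hC : ∀ b ∈ B, (#{t ∈ symmIoc x | b - Function.const _ t ∈ G} : ℝ) ≤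
      4 * x * (siftDensity p ^ m * smallFactor p y ^ (m - 1) * exp (8 * m)) := by
    intro b hb
    calc (#{t ∈ symmIoc x | b - Function.const _ t ∈ G} : ℝ)
        ≤ #{t ∈ symmIoc x | ∀ j, b j - t ∈ sifted p x} := by
          gcongr with t
          exact fun ht => Fintype.mem_piFinset.1 (mem_filter.1 ht).1
      _ ≤ _ := card_symmIoc_filter_sub_mem_sifted_le hcop hx y b
      _ ≤ _ := by
          have hexp : exp (2 * largeCoincidences p y b) ≤ exp (8 * m) :=
            exp_le_exp.2 (by linarith [(mem_filter.1 hb).2.2])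
          gcongr
  refine le_of_mul_le_mul_left ?_ (by positivity : 0 < siftDensity p ^ m * x / 2)
  calc siftDensity p ^ m * x / 2 * (δ * x ^ m) = x * (δ / 2 * (siftDensity p * x) ^ m) := by ring
    _ ≤ #(symmIoc x) * #G := mul_le_mul (le_card_symmIoc hx1)
        (mul_le_card_sifted_filter_largeCoincidences_lt hcop hm hq hy hx hδ hcard)
        (by positivity) (Nat.cast_nonneg _)
    _ ≤ #B * (4 * x * (siftDensity p ^ m * smallFactor p y ^ (m - 1) * exp (8 * m))) :=
        card_mul_card_le_of_card_sub_mem_le (Function.const (Fin m)) hadd hC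
    _ ≤ #{b ∈ tuples m (symmIoc (2 * x)) | b ∈ A} *
          (4 * x * (siftDensity p ^ m * smallFactor p y ^ (m - 1) * exp (8 * m))) := by
        gcongr
        exact monotone_filter_right _ fun _ _ hb => hb.1
    _ = _ := by ring

end Sieve

section PrimesLE

variable {m k y : ℕ} {q : ℝ}

instance fact_one_lt_primesLE (i : Nat.primesLE k) : Fact (1 < (i : ℕ)) :=
  ⟨(Nat.prime_of_mem_primesLE i.2).one_lt⟩

lemma pairwise_coprime_primesLE (k : ℕ) :
    Pairwise (Function.onFun Nat.Coprime ((↑) : Nat.primesLE k → ℕ)) := fun i j hij =>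
  (Nat.coprime_primes (Nat.prime_of_mem_primesLE i.2) (Nat.prime_of_mem_primesLE j.2)).2
    (Subtype.coe_ne_coe.2 hij)

lemma mem_sifted_primesLE_iff {x : ℝ} {n : ℤ} :
    n ∈ sifted ((↑) : Nat.primesLE k → ℕ) x ↔ n ∈ Nset k x := by
  rw [sifted, mem_filter, mem_symmIoc, Nset, Set.mem_ofPred_eq, and_assoc,
    ← Int.isCoprime_iff_gcd_eq_one, Nat.cast_prod, IsCoprime.prod_right_iff]
  refine and_congr_right fun _ => and_congr_right fun _ => ?_
  rw [Subtype.forall]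
  refine forall₂_congr fun r hr => ?_
  have hprime := Nat.prime_iff_prime_int.1 (Nat.prime_of_mem_primesLE hr)
  rw [isCoprime_comm, hprime.irreducible.coprime_iff_not_dvd, Ne,
    ZMod.intCast_zmod_eq_zero_iff_dvd]

lemma smallFactor_primesLE_le (k : ℕ) (hy : 2 ≤ y) :
    smallFactor ((↑) : Nat.primesLE k → ℕ) y ≤ 3 * exp 6 * log y := by
  have hone : ∀ p ∈ Nat.primesLE y, 1 ≤ (1 - (p : ℝ)⁻¹)⁻¹ := fun p hp =>
    (one_le_inv₀ (sub_pos.2 (inv_lt_one_of_one_lt₀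
      (mod_cast (Nat.prime_of_mem_primesLE hp).one_lt)))).2
      (sub_le_self _ (inv_nonneg.2 p.cast_nonneg))
  have hsub : {p ∈ Nat.primesLE k | p ≤ y} ⊆ Nat.primesLE y := fun p hp =>
    Nat.mem_primesLE.2 ⟨(mem_filter.1 hp).2, Nat.prime_of_mem_primesLE (mem_filter.1 hp).1⟩
  calc smallFactor ((↑) : Nat.primesLE k → ℕ) y
      = ∏ p ∈ Nat.primesLE k with p ≤ y, (1 - (p : ℝ)⁻¹)⁻¹ := by
        rw [smallFactor, prod_filter, prod_filter]
        exact prod_coe_sort (Nat.primesLE k) fun p => if p ≤ y then (1 - (p : ℝ)⁻¹)⁻¹ else 1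
    _ ≤ ∏ p ∈ Nat.primesLE y, (1 - (p : ℝ)⁻¹)⁻¹ :=
        prod_le_prod_of_subset_of_one_le hsub
          (fun p hp => zero_le_one.trans (hone p (hsub hp))) fun p hp _ => hone p hp
    _ ≤ 3 * exp 6 * log y := prod_primesLE_one_sub_inv_inv_le hy

lemma choose_pred_le (hm : m ≠ 0) (hk : m ≤ k) :
    ((k - 1).choose (m - 1) : ℝ) ≤ 3 ^ m * (k / m) ^ (m - 1) := by
  have hm0 : (0 : ℝ) < m := mod_cast Nat.pos_of_ne_zero hm
  have hk0 : (0 : ℝ) < k := hm0.trans_le (mod_cast hk)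
  have habsorb : (k * (k - 1).choose (m - 1) : ℝ) = k.choose m * m := by
    obtain ⟨m, rfl⟩ := Nat.exists_eq_succ_of_ne_zero hm
    obtain ⟨k, rfl⟩ := Nat.exists_eq_succ_of_ne_zero (Nat.ne_of_gt (by lia : 0 < k))
    exact_mod_cast Nat.add_one_mul_choose_eq k m
  have hfactorial : (m : ℝ) ^ m / m.factorial ≤ 3 ^ m := by
    refine (pow_div_factorial_le_exp _ m.cast_nonneg m).trans ?_
    rw [← exp_one_pow]
    gcongr
    exact exp_one_lt_three.le
  calc ((k - 1).choose (m - 1) : ℝ) = k.choose m * m / k := by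
        rw [← habsorb]
        field_simp
    _ ≤ k ^ m / m.factorial * m / k := by
        gcongr
        exact Nat.choose_le_pow_div m k
    _ = m ^ m / m.factorial * (k / m) ^ (m - 1) := by
        rw [← mul_pow_sub_one hm (k : ℝ), ← mul_pow_sub_one hm (m : ℝ), div_pow]
        field_simp
    _ ≤ 3 ^ m * (k / m) ^ (m - 1) := by gcongr

lemma one_le_natCast_div (hm : m ≠ 0) (hk : m ≤ k) : (1 : ℝ) ≤ k / m :=
  (one_le_div (mod_cast Nat.pos_of_ne_zero hm)).2 (mod_cast hk)

lemma log_three_le_log_three_mul_div (hm : m ≠ 0) (hk : m ≤ k) :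
    log 3 ≤ log (3 * k / m) := by
  refine log_le_log three_pos ?_
  rw [mul_div_assoc]
  linarith [one_le_natCast_div hm hk]

lemma choose_pred_le_exp_log_pow (hm : m ≠ 0) (hk : m ≤ k) :
    ((k - 1).choose (m - 1) : ℝ) ≤ exp (log (3 * k / m)) ^ m := by
  have hkm := one_le_natCast_div hm hk
  rw [mul_div_assoc, exp_log (by linarith), mul_pow]
  refine (choose_pred_le hm hk).trans ?_
  gcongr
  exact m.sub_le 1

lemma exp_le_half_inv_choose_pred (hm : m ≠ 0) (hk : m ≤ k) :
    4 ^ m * exp (2 * m - 8 * m * log (3 * k / m)) ≤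
      1 / (8 * m * (k - 1).choose (m - 1)) / 2 := by
  set q := log (3 * k / m)
  have : (0 : ℝ) < m := mod_cast Nat.pos_of_ne_zero hm
  have hchoose : (0 : ℝ) < (k - 1).choose (m - 1) :=
    mod_cast Nat.choose_pos (Nat.sub_le_sub_right hk 1)
  have hq : 1 ≤ q := by
    linarith [log_three_le_log_three_mul_div hm hk, log_three_gt_d9]
  have hlinear : 16 * (m : ℝ) ≤ 32 ^ m :=
    calc 16 * (m : ℝ) ≤ 16 ^ m * 2 ^ m := by
          gcongr
          · exact le_self_pow₀ (by norm_num) hm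
          · exact_mod_cast Nat.lt_two_pow_self.le
      _ = 32 ^ m := by rw [← mul_pow]; norm_num
  have h128 : (128 : ℝ) ≤ exp 5 :=
    calc (128 : ℝ) ≤ 2.7182818283 ^ 5 := by norm_num
      _ ≤ exp 1 ^ 5 := by gcongr; exact exp_one_gt_d9.le
      _ = exp 5 := by rw [← exp_nat_mul]; norm_num
  rw [div_div, le_div_iff₀ (by positivity), exp_sub, mul_div_assoc', div_mul_eq_mul_div,
    div_le_one (exp_pos _)]
  calc 4 ^ m * exp (2 * m) * (8 * m * (k - 1).choose (m - 1) * 2)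
      = 4 ^ m * exp (2 * m) * (16 * m * (k - 1).choose (m - 1)) := by ring
    _ ≤ 4 ^ m * exp (2 * m) * (32 ^ m * exp q ^ m) := by
        gcongr
        exact choose_pred_le_exp_log_pow hm hk
    _ = (128 * exp 2 * exp q) ^ m := by
        rw [mul_comm 2 (m : ℝ), exp_nat_mul, ← mul_pow, ← mul_pow, ← mul_pow]
        ring
    _ ≤ (exp 5 * exp 2 * exp q) ^ m := by gcongr
    _ ≤ exp (8 * q) ^ m := by
        rw [← exp_add, ← exp_add]
        gcongr
        linarith
    _ = exp (8 * m * q) := by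
        rw [← exp_nat_mul]
        ring_nf

lemma log_ceil_le (hm : m ≠ 0) (hq : log 3 ≤ q) :
    log ⌈4 * q * m⌉₊ ≤ (1 + 2 / log (log 3)) * (log q * log (3 * m)) := by
  have hm1 : (1 : ℝ) ≤ m := mod_cast Nat.one_le_iff_ne_zero.2 hm
  have hlog3 := log_three_gt_d9
  have hloglog : 0 < log (log 3) := log_pos (by linarith)
  have hlogq : log (log 3) ≤ log q := log_le_log (by linarith) hq
  have hlogm : log 3 ≤ log (3 * m) := log_le_log three_pos (by linarith)
  have hq1 : 1 < q := by linarith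
  have hceil : (⌈4 * q * m⌉₊ : ℝ) ≤ q * (3 * m) ^ 2 := by
    have hle := mul_le_mul_of_nonneg_left hm1 (by positivity : 0 ≤ q * m)
    nlinarith [Nat.ceil_lt_add_one (by positivity : 0 ≤ 4 * q * m)]
  calc log ⌈4 * q * m⌉₊ ≤ log (q * (3 * m) ^ 2) :=
        log_le_log (mod_cast Nat.ceil_pos.2 (by positivity)) hceil
    _ = log q + 2 * log (3 * m) := by
        rw [log_mul (by linarith) (by positivity), log_pow, Nat.cast_ofNat]
    _ ≤ log q * log (3 * m) + 2 * (log q / log (log 3)) * log (3 * m) := by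
        gcongr
        · exact le_mul_of_one_le_right (log_nonneg hq1.le) (by linarith)
        · linarith
        · exact le_mul_of_one_le_right two_pos.le ((one_le_div hloglog).2 hlogq)
    _ = (1 + 2 / log (log 3)) * (log q * log (3 * m)) := by ring

lemma exists_smallFactor_primesLE_ceil_le :
    ∃ C : ℝ, 1 ≤ C ∧ ∀ (m k : ℕ) (q : ℝ), m ≠ 0 → log 3 ≤ q →
      smallFactor ((↑) : Nat.primesLE k → ℕ) ⌈4 * q * m⌉₊ ≤ C * (log q * log (3 * m)) := by
  have hlog3 := log_three_gt_d9
  have hloglog : 0 < log (log 3) := log_pos (by linarith)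
  refine ⟨3 * exp 6 * (1 + 2 / log (log 3)), ?_, fun m k q hm hq => ?_⟩
  · exact one_le_mul_of_one_le_of_one_le (by linarith [one_le_exp (show (0 : ℝ) ≤ 6 by norm_num)])
      (le_add_of_nonneg_right (by positivity))
  · have hm1 : (1 : ℝ) ≤ m := mod_cast Nat.one_le_iff_ne_zero.2 hm
    have htwo : 2 ≤ ⌈4 * q * m⌉₊ := by
      refine Nat.lt_ceil.2 ?_
      push_cast
      nlinarith
    rw [mul_assoc (3 * exp 6)]
    exact (smallFactor_primesLE_le k htwo).trans (by gcongr; exact log_ceil_le hm hq)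

lemma exists_mul_le_rpow {a F : ℝ} (ha : 1 < a) (hF : 1 ≤ F) :
    ∃ c : ℝ, 0 < c ∧ ∀ b ≥ a, F * b ≤ b ^ c := by
  refine ⟨logb a F + 1, by linarith [logb_nonneg ha hF], fun b hb => ?_⟩
  have hb0 : 0 < b := by linarith
  rw [rpow_add_one hb0.ne']
  gcongr
  calc F = a ^ logb a F := (rpow_logb (by linarith) ha.ne' (by linarith)).symm
    _ ≤ b ^ logb a F := rpow_le_rpow (by linarith) hb (logb_nonneg ha hF)

lemma choose_pred_mul_pow_mul_exp_le {S L T : ℝ} (hm : m ≠ 0) (hk : m ≤ k) (hS : 0 ≤ S)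
    (hL : 0 ≤ L) (hT : 1 ≤ T) (hST : S ≤ L * T) :
    8 * m * (k - 1).choose (m - 1) * (8 * S ^ (m - 1) * exp (8 * m)) ≤
      (384 * exp 8 * T) ^ m * (k / m * L) ^ (m - 1) := by
  have htwo_pow : (m : ℝ) ≤ 2 ^ m := mod_cast Nat.lt_two_pow_self.le
  calc 8 * m * (k - 1).choose (m - 1) * (8 * S ^ (m - 1) * exp (8 * m))
      ≤ 8 * 2 ^ m * (3 ^ m * (k / m) ^ (m - 1)) * (8 * (L * T) ^ (m - 1) * exp (8 * m)) := by
        gcongr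
        exact choose_pred_le hm hk
    _ = 64 * 2 ^ m * 3 ^ m * exp 8 ^ m * T ^ (m - 1) * (k / m * L) ^ (m - 1) := by
        rw [mul_comm 8 (m : ℝ), exp_nat_mul, mul_pow, mul_pow]
        ring
    _ ≤ 64 ^ m * 2 ^ m * 3 ^ m * exp 8 ^ m * T ^ m * (k / m * L) ^ (m - 1) := by
        gcongr
        · exact le_self_pow₀ (by norm_num) hm
        · exact m.sub_le 1
    _ = (384 * exp 8 * T) ^ m * (k / m * L) ^ (m - 1) := by
        simp only [← mul_pow]
        norm_num

lemma exists_choose_mul_smallFactor_pow_le :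
    ∃ c : ℝ, 0 < c ∧ ∀ m k : ℕ, m ≠ 0 → m ≤ k →
      8 * m * (k - 1).choose (m - 1) *
          (8 * smallFactor ((↑) : Nat.primesLE k → ℕ) ⌈4 * log (3 * k / m) * m⌉₊ ^ (m - 1) *
            exp (8 * m)) ≤
        log (3 * m) ^ (c * m) * (k / m * log (log (3 * k / m))) ^ (m - 1) := by
  have hlog3 : 1 < log 3 := by linarith [log_three_gt_d9]
  obtain ⟨C, hC1, hC⟩ := exists_smallFactor_primesLE_ceil_le
  obtain ⟨c, hc0, hc⟩ := exists_mul_le_rpow hlog3 (F := 384 * exp 8 * C) <|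
    one_le_mul_of_one_le_of_one_le (by linarith [one_le_exp (show (0 : ℝ) ≤ 8 by norm_num)]) hC1
  refine ⟨c, hc0, fun m k hm hk => ?_⟩
  have hq := log_three_le_log_three_mul_div hm hk
  have hlogq : 0 < log (log (3 * k / m)) := log_pos (by linarith)
  have hlogm : log 3 ≤ log (3 * m) := log_le_log three_pos <| by
    linarith [show (1 : ℝ) ≤ m from mod_cast Nat.one_le_iff_ne_zero.2 hm]
  refine (choose_pred_mul_pow_mul_exp_le hm hk (smallFactor_nonneg _ _) hlogq.le
    (one_le_mul_of_one_le_of_one_le hC1 (by linarith))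
    ((hC m k _ hm hq).trans_eq (mul_left_comm _ _ _))).trans ?_
  have hkm := one_le_natCast_div hm hk
  have hnonneg : 0 ≤ 384 * exp 8 * C * log (3 * m) :=
    mul_nonneg (mul_nonneg (by positivity) (by linarith)) (by linarith)
  rw [rpow_mul_natCast (by linarith), ← mul_assoc (384 * exp 8)]
  gcongr
  exact hc _ hlogm

end PrimesLE

lemma natCard_mem_and_forall_eq_card_tuples_filter {α : Type*} {m : ℕ} {A : Set (Fin m → α)}
    [DecidablePred (· ∈ A)] {P : α → Prop} {s : Finset α} (hs : ∀ a, a ∈ s ↔ P a) :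
    Nat.card {h : Fin m → α // h ∈ A ∧ ∀ i, P (h i)} = #{h ∈ tuples m s | h ∈ A} :=
  Nat.subtype_card _ fun h => by simp [tuples, hs, and_comm]

theorem stmt_14_general : ∃ c : ℝ, 0 < c ∧ ∀ m k : ℕ, 1 ≤ m → m ≤ k →
    ∃ x₀ : ℝ, ∀ x : ℝ, x₀ ≤ x →
      ∀ A : Set (Fin m → ℤ),
        (∀ h ∈ A, ∀ t : ℤ, (fun i => h i + t) ∈ A) →
        1 / (8 * m * Nat.choose (k - 1) (m - 1) : ℝ) <
          (Nat.card {h : Fin m → ℤ // h ∈ A ∧ ∀ i, h i ∈ Nset k x} : ℝ) /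
            (Nat.card (Nset k x) : ℝ) ^ m →
        (Real.log (3 * m)) ^ (-(c * m)) * x ^ m /
            ((k / m : ℝ) * Real.log (Real.log (3 * k / m))) ^ (m - 1) ≤
          (Nat.card {h : Fin m → ℤ //
            h ∈ A ∧ ∀ i, -(2 * x) < (h i : ℝ) ∧ (h i : ℝ) ≤ 2 * x} : ℝ) := by
  classical
  obtain ⟨c, hc0, hc⟩ := exists_choose_mul_smallFactor_pow_le
  refine ⟨c, hc0, fun m k hm1 hk => ⟨(∏ p : Nat.primesLE k, (p : ℕ) : ℕ) + 1, ?_⟩⟩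
  intro x hx A hA hdens
  have hm : m ≠ 0 := Nat.one_le_iff_ne_zero.1 hm1
  have hm' : (1 : ℝ) ≤ m := mod_cast hm1
  have hq := log_three_le_log_three_mul_div hm hk
  have hlog3 := log_three_gt_d9
  have hL : 0 < log (3 * m) := log_pos (by linarith)
  have hloglog : 0 < log (log (3 * k / m)) := log_pos (by linarith)
  have hkm := one_le_natCast_div hm hk
  have hchoose : (0 : ℝ) < (k - 1).choose (m - 1) :=
    mod_cast Nat.choose_pos (Nat.sub_le_sub_right hk 1)
  rw [natCard_mem_and_forall_eq_card_tuples_filter fun _ => mem_sifted_primesLE_iff,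
    Nat.subtype_card _ fun _ => mem_sifted_primesLE_iff] at hdens
  rw [natCard_mem_and_forall_eq_card_tuples_filter fun _ => mem_symmIoc]
  have hmain := mul_pow_le_card_of_translation_invariant (pairwise_coprime_primesLE k) hm
    (by linarith) (Nat.le_ceil _) hx (exp_le_half_inv_choose_pred hm hk) hA
    (mul_le_of_le_div₀ (by positivity) (by positivity) hdens.le)
  rw [one_div_mul_eq_div, div_le_iff₀' (by positivity)] at hmain
  rw [div_le_iff₀' (by positivity), rpow_neg hL.le, inv_mul_le_iff₀ (by positivity), ← mul_assoc]
  rw [← mul_assoc] at hmain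
  exact hmain.trans (mul_le_mul_of_nonneg_right (hc m k hm hk) (Nat.cast_nonneg _))

theorem stmt_14 : ∃ c : ℝ, 0 < c ∧ ∀ m k : ℕ, 1 ≤ m → m ≤ k →
    ∃ x₀ : ℝ, ∀ x : ℝ, x₀ ≤ x →
      ∀ A : Set (Fin m → ℤ),
        (∀ h ∈ A, ∀ t : ℤ, (fun i => h i + t) ∈ A) →
        (∀ h ∈ A, ∀ σ : Equiv.Perm (Fin m), (h ∘ σ) ∈ A) →
        1 / (8 * m * Nat.choose (k - 1) (m - 1) : ℝ) <
          (Nat.card {h : Fin m → ℤ // h ∈ A ∧ ∀ i, h i ∈ Nset k x} : ℝ) /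
            (Nat.card (Nset k x) : ℝ) ^ m →
        (Real.log (3 * m)) ^ (-(c * m)) * x ^ m /
            ((k / m : ℝ) * Real.log (Real.log (3 * k / m))) ^ (m - 1) ≤
          (Nat.card {h : Fin m → ℤ //
            h ∈ A ∧ ∀ i, -(2 * x) < (h i : ℝ) ∧ (h i : ℝ) ≤ 2 * x} : ℝ) := by
  obtain ⟨c, hc0, hc⟩ := stmt_14_general
  exact ⟨c, hc0, fun m k hm hk => (hc m k hm hk).imp fun _ h x hx A hA _ => h x hx A hA⟩
end
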